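/- arXiv:2003.02521 — 2 statements merged into one kernel-verified Lean document; each statement's English description precedes it below -/
import Mathlib

section
/- (k-universal models for reversible constraints) Assume Σ_UID^rev and Σ_UFD are reversible, let k ∈ ℕ, and let I₀ be a finite instance satisfying Σ_UFD. Then there exists a finite superinstance I of I₀ that satisfies Σ_UID^rev ∪ Σ_UFD and is k-sound for Σ_UID^rev ∪ Σ_UFD, I₀, and the class ACQ of acyclic Boolean CQs (hence a finite k-universal model for ACQs). -/
namespace FQA

/-- A relational signature: a finite set of relation names, each with an arity `≥ 1`. -/
structure Sig where
  Rel : Type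
  rel_fin : Finite Rel
  ar : Rel → ℕ
  ar_pos : ∀ R, 1 ≤ ar R

/-- The positions of a signature: pairs of a relation and an index into its arity. -/
abbrev Sig.Pos (σ : Sig) : Type := Σ R : σ.Rel, Fin (σ.ar R)

/-- A fact `R(a₁, …, a_{ar R})` with elements from `α`. -/
abbrev Fact (σ : Sig) (α : Type) : Type := Σ R : σ.Rel, Fin (σ.ar R) → α

/-- An instance is a set of facts. -/
abbrev Inst (σ : Sig) (α : Type) : Type := Set (Fact σ α)

variable {σ : Sig} {α β : Type}

/-- Element `a` occurs at position `p` in some fact of the instance `I`. -/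
def occursAt (I : Inst σ α) (p : σ.Pos) (a : α) : Prop :=
  ∃ t : Fin (σ.ar p.1) → α, (⟨p.1, t⟩ : Fact σ α) ∈ I ∧ t p.2 = a

/-- The active domain of an instance: the elements occurring in some fact. -/
def activeDom (I : Inst σ α) : Set α :=
  {a | ∃ F : Fact σ α, F ∈ I ∧ ∃ i, F.2 i = a}

/-- A unary inclusion dependency `src ⊆ dst` (nontrivial: `src ≠ dst`). -/
structure UID (σ : Sig) where
  src : σ.Pos
  dst : σ.Pos
  ne : src ≠ dst

/-- The reverse of a UID. -/
def UID.rev (τ : UID σ) : UID σ := ⟨τ.dst, τ.src, τ.ne.symm⟩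

/-- An instance satisfies a UID if every element occurring at `src` also occurs at `dst`. -/
def satUID (I : Inst σ α) (τ : UID σ) : Prop :=
  ∀ a, occursAt I τ.src a → occursAt I τ.dst a

/-- A unary functional dependency `R^src → R^dst` (nontrivial: `src ≠ dst`). -/
structure UFD (σ : Sig) where
  rel : σ.Rel
  src : Fin (σ.ar rel)
  dst : Fin (σ.ar rel)
  ne : src ≠ dst

/-- The reverse of a UFD. -/
def UFD.rev (φ : UFD σ) : UFD σ := ⟨φ.rel, φ.dst, φ.src, φ.ne.symm⟩

/-- The source position of a UFD, as a position of the signature. -/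
def UFD.posSrc (φ : UFD σ) : σ.Pos := ⟨φ.rel, φ.src⟩

/-- The target position of a UFD, as a position of the signature. -/
def UFD.posDst (φ : UFD σ) : σ.Pos := ⟨φ.rel, φ.dst⟩

/-- An instance satisfies a UFD if any two facts of `rel` agreeing at `src` agree at `dst`. -/
def satUFD (I : Inst σ α) (φ : UFD σ) : Prop :=
  ∀ t u : Fin (σ.ar φ.rel) → α,
    (⟨φ.rel, t⟩ : Fact σ α) ∈ I → (⟨φ.rel, u⟩ : Fact σ α) ∈ I →
    t φ.src = u φ.src → t φ.dst = u φ.dst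

/-- A Boolean conjunctive query: existentially quantified variables `Fin nv` and a
conjunction (list) of constant-free atoms, in which every variable occurs. -/
structure CQ (σ : Sig) where
  nv : ℕ
  atoms : List (Fact σ (Fin nv))
  vars_occur : ∀ x : Fin nv, ∃ A ∈ atoms, ∃ i, A.2 i = x

/-- The size of a CQ: its number of atoms. -/
def CQ.size (q : CQ σ) : ℕ := q.atoms.length

/-- A Boolean CQ holds in an instance iff there is a homomorphism (a match) from its
atoms to facts of the instance. -/
def satCQ (I : Inst σ α) (q : CQ σ) : Prop :=
  ∃ h : Fin q.nv → α, ∀ A ∈ q.atoms, (⟨A.1, fun i => h (A.2 i)⟩ : Fact σ α) ∈ I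

/-- A Berge cycle of a CQ: `m + 2 ≥ 2` pairwise distinct atom occurrences and pairwise
distinct variables, cyclically incident. -/
def HasBergeCycle (q : CQ σ) : Prop :=
  ∃ m : ℕ, ∃ A : Fin (m + 2) → Fin q.atoms.length, Function.Injective A ∧
    ∃ x : Fin (m + 2) → Fin q.nv, Function.Injective x ∧
      ∀ i : Fin (m + 2),
        (∃ a, (q.atoms.get (A i)).2 a = x i) ∧
        (∃ a, (q.atoms.get (A (i + 1))).2 a = x i)

/-- An acyclic CQ (ACQ): no Berge cycle and no variable occurring twice in one atom. -/
def IsACQ (q : CQ σ) : Prop :=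
  ¬ HasBergeCycle q ∧ ∀ A ∈ q.atoms, Function.Injective A.2

/-- A set of UIDs is transitively closed. -/
def TransClosedUID (Su : Set (UID σ)) : Prop :=
  ∀ τ ∈ Su, ∀ τ' ∈ Su, τ.dst = τ'.src →
    ∀ h : τ.src ≠ τ'.dst, (⟨τ.src, τ'.dst, h⟩ : UID σ) ∈ Su

/-- A set of UFDs is closed under UFD transitivity. -/
def TransClosedUFD (Sf : Set (UFD σ)) : Prop :=
  ∀ (R : σ.Rel) (i j k : Fin (σ.ar R)) (h1 : i ≠ j) (h2 : j ≠ k) (h3 : i ≠ k),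
    (⟨R, i, j, h1⟩ : UFD σ) ∈ Sf → (⟨R, j, k, h2⟩ : UFD σ) ∈ Sf →
    (⟨R, i, k, h3⟩ : UFD σ) ∈ Sf

/-- A position occurs in some UID of `Su`. -/
def occursInUIDs (Su : Set (UID σ)) (p : σ.Pos) : Prop :=
  ∃ τ ∈ Su, τ.src = p ∨ τ.dst = p

/-- The UIDs `Su` and UFDs `Sf` are reversible: both are closed under implication
(transitivity), every UID of `Su` has its reverse in `Su`, and every UFD of `Sf`
whose two positions occur in UIDs of `Su` has its reverse in `Sf`. -/
def Reversible (Su : Set (UID σ)) (Sf : Set (UFD σ)) : Prop :=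
  TransClosedUID Su ∧ TransClosedUFD Sf ∧
  (∀ τ ∈ Su, τ.rev ∈ Su) ∧
  (∀ φ ∈ Sf, occursInUIDs Su φ.posSrc → occursInUIDs Su φ.posDst → φ.rev ∈ Sf)

/-- An instance satisfies a set of UIDs and a set of UFDs. -/
def satAllU (I : Inst σ ℕ) (Su : Set (UID σ)) (Sf : Set (UFD σ)) : Prop :=
  (∀ τ ∈ Su, satUID I τ) ∧ (∀ φ ∈ Sf, satUFD I φ)

/-- Unrestricted open-world entailment with respect to UIDs and UFDs. -/
def unrEntailsU (I₀ : Inst σ ℕ) (Su : Set (UID σ)) (Sf : Set (UFD σ)) (q : CQ σ) : Prop :=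
  ∀ I : Inst σ ℕ, I₀ ⊆ I → satAllU I Su Sf → satCQ I q

/-- A (nontrivial) UID is finitely implied by UIDs `Su` and UFDs `Sf`. -/
def finImpUIDu (Su : Set (UID σ)) (Sf : Set (UFD σ)) (τ : UID σ) : Prop :=
  ∀ I : Inst σ ℕ, I.Finite → satAllU I Su Sf → satUID I τ

/-- A (nontrivial) UFD is finitely implied by UIDs `Su` and UFDs `Sf`. -/
def finImpUFDu (Su : Set (UID σ)) (Sf : Set (UFD σ)) (φ : UFD σ) : Prop :=
  ∀ I : Inst σ ℕ, I.Finite → satAllU I Su Sf → satUFD I φ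

/-- Elements of the UID chase: base elements of the initial instance, and nulls.
The null `CEl.null x p r` is the fresh element placed at position `r` of the fact
created to satisfy the requirement that `x` appear at position `p`. -/
inductive CEl (σ : Sig) : Type
  | base : ℕ → CEl σ
  | null : CEl σ → σ.Pos → σ.Pos → CEl σ

/-- `Created I₀ Su x p` holds when the UID chase of `I₀` by the (transitively closed)
UIDs `Su` creates a new fact whose exported element is `x`, placed at position `p`.
The first round is performed as a core-chase round: for each element of `I₀` and each
position where it wants to appear, a single new fact is created; afterwards, each
null introduced at a position `r` spawns one new fact for each UID of `Su` with
source `r`. -/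
inductive Created (I₀ : Inst σ ℕ) (Su : Set (UID σ)) : CEl σ → σ.Pos → Prop
  | root (a : ℕ) (p : σ.Pos) :
      (∃ τ ∈ Su, τ.dst = p ∧ occursAt I₀ τ.src a) →
      ¬ occursAt I₀ p a →
      Created I₀ Su (CEl.base a) p
  | step (x : CEl σ) (p r q : σ.Pos) :
      Created I₀ Su x p → r.1 = p.1 → r ≠ p →
      (∃ τ ∈ Su, τ.src = r ∧ τ.dst = q) →
      Created I₀ Su (CEl.null x p r) q

/-- The UID chase of `I₀` by `Su`: the facts of `I₀` (over base elements) together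
with, for each requirement `(x, p)` that is created, the fact of relation `p.1` with
`x` at position `p` and fresh nulls at all other positions. -/
def chaseInst (I₀ : Inst σ ℕ) (Su : Set (UID σ)) : Inst σ (CEl σ) :=
  {F | (∃ F₀ : Fact σ ℕ, F₀ ∈ I₀ ∧ F = ⟨F₀.1, fun i => CEl.base (F₀.2 i)⟩) ∨
       (∃ (x : CEl σ) (p : σ.Pos), Created I₀ Su x p ∧
          F = ⟨p.1, fun i => if i = p.2 then x else CEl.null x p ⟨p.1, i⟩⟩)}

/-!
The chase of `I₀` by the UIDs is a universal model, but an infinite one. Keep only its facts that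
contain an element of depth at most `k`. The elements that still miss a position are then deeper
than `k`, and the missing facts are supplied all at once by counting. Reversibility makes being
linked by a UID an equivalence relation on positions, and gives mutually determining positions of
the UIDs the same number of values. Fresh elements make all classes of positions equally large;
then positions of one relation that determine each other lack the same number of values, and the
lacking values can be handed out to new facts position by position, in a common order. A position
that has nothing left to receive repeats its entry in a template fact of its relation, as do the
positions it determines, so that no UFD is violated.

In the resulting finite model every element other than those of `I₀` occurs at positions of a single
class. A match of a query with at most `k` atoms leaves some depth level `d ≤ k + 1` that no atom
straddles. The atoms below `d` lie in the chase, which maps to every model `M` of the constraints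
containing `I₀`. The atoms above `d` are mapped to `M` one at a time: an acyclic set of atoms has an
atom sharing at most one variable with the others, and by the UIDs of `M` the image of that variable
occurs wherever it has to.
-/

section Positions

variable {Su : Set (UID σ)} {Sf : Set (UFD σ)} {p q r : σ.Pos}

/-- The reflexive closure of the UIDs, as a relation on positions. When `Su` and `Sf` are
reversible it is an equivalence relation. -/
def UIDReaches (Su : Set (UID σ)) (p q : σ.Pos) : Prop :=
  p = q ∨ ∃ τ ∈ Su, τ.src = p ∧ τ.dst = q

lemma UIDReaches.refl (Su : Set (UID σ)) (p : σ.Pos) : UIDReaches Su p p := Or.inl rfl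

lemma UIDReaches.of_mem {τ : UID σ} (hτ : τ ∈ Su) : UIDReaches Su τ.src τ.dst :=
  Or.inr ⟨τ, hτ, rfl, rfl⟩

lemma UIDReaches.trans (hSu : TransClosedUID Su) (hpq : UIDReaches Su p q)
    (hqr : UIDReaches Su q r) : UIDReaches Su p r := by
  rcases hpq with rfl | ⟨τ, hτ, rfl, rfl⟩
  · exact hqr
  rcases hqr with rfl | ⟨τ', hτ', hsrc, rfl⟩
  · exact .of_mem hτ
  by_cases hne : τ.src = τ'.dst
  · exact Or.inl hne
  · exact Or.inr ⟨_, hSu τ hτ τ' hτ' hsrc.symm hne, rfl, rfl⟩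

lemma UIDReaches.symm (hSu : ∀ τ ∈ Su, τ.rev ∈ Su) (hpq : UIDReaches Su p q) :
    UIDReaches Su q p := by
  rcases hpq with rfl | ⟨τ, hτ, rfl, rfl⟩
  · exact .refl Su p
  · exact Or.inr ⟨τ.rev, hSu τ hτ, rfl, rfl⟩

lemma occursAt_of_uidReaches {I : Inst σ α} (hI : ∀ τ ∈ Su, satUID I τ) {a : α}
    (hpq : UIDReaches Su p q) (ha : occursAt I p a) : occursAt I q a := by
  rcases hpq with rfl | ⟨τ, hτ, rfl, rfl⟩
  · exact ha
  · exact hI τ hτ a ha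

/-- The positions linked to `p` by the UIDs. -/
def posClass (Su : Set (UID σ)) (p : σ.Pos) : Set σ.Pos := {q | UIDReaches Su q p}

lemma posClass_eq_iff (hSu : TransClosedUID Su) (hSu' : ∀ τ ∈ Su, τ.rev ∈ Su) :
    posClass Su p = posClass Su q ↔ UIDReaches Su p q := by
  constructor
  · intro h
    have hp : p ∈ posClass Su p := .refl Su p
    rwa [h] at hp
  · intro hpq
    ext r
    exact ⟨fun hr => hr.trans hSu hpq, fun hr => hr.trans hSu (hpq.symm hSu')⟩

/-- The reflexive closure of the UFDs on the positions of one relation. -/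
def Determines (Sf : Set (UFD σ)) (R : σ.Rel) (i j : Fin (σ.ar R)) : Prop :=
  i = j ∨ ∃ h : i ≠ j, (⟨R, i, j, h⟩ : UFD σ) ∈ Sf

lemma Determines.trans (hSf : TransClosedUFD Sf) {R : σ.Rel} {i j l : Fin (σ.ar R)}
    (hij : Determines Sf R i j) (hjl : Determines Sf R j l) : Determines Sf R i l := by
  rcases hij with rfl | ⟨hij, hij'⟩
  · exact hjl
  rcases hjl with rfl | ⟨hjl, hjl'⟩
  · exact Or.inr ⟨hij, hij'⟩
  by_cases hil : i = l
  · exact Or.inl hil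
  · exact Or.inr ⟨hil, hSf R i j l hij hjl hil hij' hjl'⟩

end Positions

section Instances

/-- The projection `π_p(I)`. -/
def valuesAt (I : Inst σ α) (p : σ.Pos) : Set α := {a | occursAt I p a}

lemma activeDom_finite {I : Inst σ α} (hI : I.Finite) : (activeDom I).Finite := by
  refine (hI.biUnion fun F _ => Set.finite_range F.2).subset ?_
  rintro a ⟨F, hF, i, rfl⟩
  exact Set.mem_biUnion hF ⟨i, rfl⟩

lemma valuesAt_subset_activeDom (I : Inst σ α) (p : σ.Pos) : valuesAt I p ⊆ activeDom I := by
  rintro a ⟨t, ht, rfl⟩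
  exact ⟨_, ht, p.2, rfl⟩

lemma ncard_valuesAt_posDst_le {I : Inst σ α} (hI : I.Finite) {φ : UFD σ} (hφ : satUFD I φ) :
    (valuesAt I φ.posDst).ncard ≤ (valuesAt I φ.posSrc).ncard := by
  have : Finite (valuesAt I φ.posSrc) :=
    (activeDom_finite hI).subset (valuesAt_subset_activeDom I _)
  choose t ht ht' using fun b : valuesAt I φ.posDst => b.2
  refine Nat.card_le_card_of_injective
    (fun b => (⟨t b φ.src, t b, ht b, rfl⟩ : valuesAt I φ.posSrc)) fun b c hbc => ?_
  exact Subtype.ext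
    ((ht' b).symm.trans ((hφ _ _ (ht b) (ht c) (congrArg Subtype.val hbc)).trans (ht' c)))

lemma ncard_valuesAt_eq_of_determines {Su : Set (UID σ)} {Sf : Set (UFD σ)}
    (hrev : Reversible Su Sf) {I : Inst σ α} (hI : I.Finite) (hSf : ∀ φ ∈ Sf, satUFD I φ)
    {R : σ.Rel} {i j : Fin (σ.ar R)} (hij : Determines Sf R i j)
    (hi : occursInUIDs Su ⟨R, i⟩) (hj : occursInUIDs Su ⟨R, j⟩) :
    (valuesAt I ⟨R, i⟩).ncard = (valuesAt I ⟨R, j⟩).ncard := by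
  rcases hij with rfl | ⟨hne, hmem⟩
  · rfl
  exact le_antisymm (ncard_valuesAt_posDst_le hI (hSf _ (hrev.2.2.2 _ hmem hi hj)))
    (ncard_valuesAt_posDst_le hI (hSf _ hmem))

/-- The instance `I` with its elements renamed (and possibly identified) by `g`. -/
def Inst.map (g : α → β) (I : Inst σ α) : Inst σ β :=
  (fun F => ⟨F.1, fun i => g (F.2 i)⟩) '' I

lemma mem_map_iff {g : α → β} {I : Inst σ α} {R : σ.Rel} {t : Fin (σ.ar R) → β} :
    (⟨R, t⟩ : Fact σ β) ∈ Inst.map g I ↔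
      ∃ s, (⟨R, s⟩ : Fact σ α) ∈ I ∧ t = fun i => g (s i) := by
  constructor
  · rintro ⟨⟨R', s⟩, hs, heq⟩
    cases heq
    exact ⟨s, hs, rfl⟩
  · rintro ⟨s, hs, rfl⟩
    exact ⟨_, hs, rfl⟩

lemma satUID_map {I : Inst σ α} {τ : UID σ} (g : α → β) (hI : satUID I τ) :
    satUID (Inst.map g I) τ := by
  rintro a ⟨t, ht, rfl⟩
  obtain ⟨s, hs, rfl⟩ := mem_map_iff.1 ht
  obtain ⟨u, hu, hus⟩ := hI _ ⟨s, hs, rfl⟩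
  exact ⟨_, mem_map_iff.2 ⟨u, hu, rfl⟩, congrArg g hus⟩

lemma satUFD_map {g : α → β} {I : Inst σ α} (hg : Set.InjOn g (activeDom I)) {φ : UFD σ}
    (hI : satUFD I φ) : satUFD (Inst.map g I) φ := by
  intro t u ht hu htu
  obtain ⟨t', ht', rfl⟩ := mem_map_iff.1 ht
  obtain ⟨u', hu', rfl⟩ := mem_map_iff.1 hu
  exact congrArg g (hI t' u' ht' hu' (hg ⟨_, ht', _, rfl⟩ ⟨_, hu', _, rfl⟩ htu))

lemma satCQ_of_satCQ_map {g : α → β} {I : Inst σ α} (hg : Set.InjOn g (activeDom I)) {q : CQ σ}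
    (hq : satCQ (Inst.map g I) q) : satCQ I q := by
  obtain ⟨f, hf⟩ := hq
  have lift : ∀ x, ∃ a ∈ activeDom I, g a = f x := by
    intro x
    obtain ⟨A, hA, i, rfl⟩ := q.vars_occur x
    obtain ⟨s, hs, hfs⟩ := mem_map_iff.1 (hf A hA)
    exact ⟨s i, ⟨_, hs, i, rfl⟩, (congrFun hfs i).symm⟩
  choose f' hf' hgf using lift
  refine ⟨f', fun A hA => ?_⟩
  obtain ⟨s, hs, hfs⟩ := mem_map_iff.1 (hf A hA)
  have hf's : (fun i => f' (A.2 i)) = s :=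
    funext fun i => hg (hf' _) ⟨_, hs, i, rfl⟩ ((hgf _).trans (congrFun hfs i))
  rwa [hf's]

lemma exists_injOn_leftInverse {b : ℕ → α} (hb : Function.Injective b) {S : Set α}
    (hS : S.Finite) : ∃ g : α → ℕ, Set.InjOn g S ∧ Function.LeftInverse g b := by
  obtain ⟨B, hB⟩ := (hS.preimage hb.injOn).bddAbove
  obtain ⟨f, hf⟩ := Set.countable_iff_exists_injOn.1 hS.countable
  let g : α → ℕ := Function.extend b id fun v => B + 1 + f v
  have g_base : ∀ n, g (b n) = n := hb.extend_apply id _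
  have g_other : ∀ v, (¬ ∃ n, b n = v) → g v = B + 1 + f v := Function.extend_apply' _ _
  have g_ne : ∀ n w, b n ∈ S → (¬ ∃ n, b n = w) → g (b n) ≠ g w := by
    intro n w hn hw
    have : n ≤ B := hB hn
    rw [g_base, g_other w hw]
    omega
  refine ⟨g, fun v hv w hw hvw => ?_, g_base⟩
  by_cases hvb : ∃ n, b n = v <;> by_cases hwb : ∃ n, b n = w
  · obtain ⟨⟨n, rfl⟩, m, rfl⟩ := And.intro hvb hwb
    rw [g_base, g_base] at hvw
    rw [hvw]
  · obtain ⟨n, rfl⟩ := hvb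
    exact absurd hvw (g_ne n w hv hwb)
  · obtain ⟨n, rfl⟩ := hwb
    exact absurd hvw.symm (g_ne n v hw hvb)
  · rw [g_other v hvb, g_other w hwb] at hvw
    exact hf hv hw (Nat.add_left_cancel hvw)

end Instances

section Chase

variable {I₀ : Inst σ ℕ} {Su : Set (UID σ)}

/-- The tuple of the chase fact created for the requirement that `x` occur at `⟨R, i⟩`. -/
def chaseTuple (x : CEl σ) {R : σ.Rel} (i : Fin (σ.ar R)) : Fin (σ.ar R) → CEl σ :=
  fun j => if j = i then x else CEl.null x ⟨R, i⟩ ⟨R, j⟩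

lemma chaseTuple_self (x : CEl σ) {R : σ.Rel} (i : Fin (σ.ar R)) : chaseTuple x i i = x :=
  if_pos rfl

lemma chaseTuple_of_ne (x : CEl σ) {R : σ.Rel} {i j : Fin (σ.ar R)} (hji : j ≠ i) :
    chaseTuple x i j = CEl.null x ⟨R, i⟩ ⟨R, j⟩ := if_neg hji

lemma mem_chaseInst_iff {R : σ.Rel} {t : Fin (σ.ar R) → CEl σ} :
    (⟨R, t⟩ : Fact σ (CEl σ)) ∈ chaseInst I₀ Su ↔
      (∃ t₀ : Fin (σ.ar R) → ℕ, (⟨R, t₀⟩ : Fact σ ℕ) ∈ I₀ ∧ t = fun i => CEl.base (t₀ i)) ∨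
      ∃ x i, Created I₀ Su x ⟨R, i⟩ ∧ t = chaseTuple x i := by
  constructor
  · rintro (⟨⟨R₀, t₀⟩, ht₀, heq⟩ | ⟨x, ⟨R', i⟩, hx, heq⟩)
    · cases heq
      exact Or.inl ⟨t₀, ht₀, rfl⟩
    · cases heq
      exact Or.inr ⟨x, i, hx, rfl⟩
  · rintro (⟨t₀, ht₀, rfl⟩ | ⟨x, i, hx, rfl⟩)
    · exact Or.inl ⟨_, ht₀, rfl⟩
    · exact Or.inr ⟨x, _, hx, rfl⟩

lemma Created.occursAt_chaseInst {x : CEl σ} {p : σ.Pos} (hx : Created I₀ Su x p) :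
    occursAt (chaseInst I₀ Su) p x :=
  ⟨chaseTuple x p.2, Or.inr ⟨x, p, hx, rfl⟩, chaseTuple_self x p.2⟩

lemma occursAt_chaseInst_base {a : ℕ} {p : σ.Pos} (ha : occursAt I₀ p a) :
    occursAt (chaseInst I₀ Su) p (CEl.base a) := by
  obtain ⟨t, ht, rfl⟩ := ha
  exact ⟨_, Or.inl ⟨_, ht, rfl⟩, rfl⟩

lemma exists_uidReaches_of_occursAt_chaseInst_base {a : ℕ} {q : σ.Pos}
    (ha : occursAt (chaseInst I₀ Su) q (CEl.base a)) :
    ∃ r, UIDReaches Su r q ∧ occursAt I₀ r a := by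
  obtain ⟨R, j⟩ := q
  obtain ⟨t, ht, hta⟩ := ha
  rcases mem_chaseInst_iff.1 ht with ⟨t₀, ht₀, rfl⟩ | ⟨x, i, hx, rfl⟩
  · exact ⟨⟨R, j⟩, .refl Su _, t₀, ht₀, CEl.base.inj hta⟩
  by_cases hji : j = i
  · subst hji
    obtain rfl : x = CEl.base a := (chaseTuple_self x j).symm.trans hta
    cases hx with
    | root _ _ hsrc _ =>
      obtain ⟨τ, hτ, hdst, hocc⟩ := hsrc
      exact ⟨τ.src, Or.inr ⟨τ, hτ, rfl, hdst⟩, hocc⟩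
  · cases (chaseTuple_of_ne x hji).symm.trans hta

lemma created_of_occursAt_chaseInst_null {x : CEl σ} {p r q : σ.Pos}
    (h : occursAt (chaseInst I₀ Su) q (CEl.null x p r)) :
    Created I₀ Su x p ∧ r.1 = p.1 ∧ r ≠ p ∧ UIDReaches Su r q := by
  obtain ⟨R, j⟩ := q
  obtain ⟨t, ht, htj⟩ := h
  rcases mem_chaseInst_iff.1 ht with ⟨t₀, _, rfl⟩ | ⟨y, i, hy, rfl⟩
  · cases htj
  by_cases hji : j = i
  · subst hji
    obtain rfl : y = CEl.null x p r := (chaseTuple_self y j).symm.trans htj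
    cases hy with
    | step _ _ _ _ hx hrel hne hUID => exact ⟨hx, hrel, hne, Or.inr hUID⟩
  · cases (chaseTuple_of_ne y hji).symm.trans htj
    exact ⟨hy, rfl, fun h => hji (by cases h; rfl), .refl Su _⟩

lemma Created.occursAt_chaseInst_null {x : CEl σ} {p r : σ.Pos} (hx : Created I₀ Su x p)
    (hrel : r.1 = p.1) (hne : r ≠ p) : occursAt (chaseInst I₀ Su) r (CEl.null x p r) := by
  obtain ⟨R, i⟩ := p
  obtain ⟨R', j⟩ := r
  obtain rfl : R' = R := hrel
  exact ⟨chaseTuple x i, Or.inr ⟨x, _, hx, rfl⟩,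
    chaseTuple_of_ne x fun hji => hne (congrArg _ hji)⟩

lemma satUID_chaseInst (hSu : TransClosedUID Su) {τ : UID σ} (hτ : τ ∈ Su) :
    satUID (chaseInst I₀ Su) τ := by
  intro v hv
  cases v with
  | base a =>
    obtain ⟨r, hr, hra⟩ := exists_uidReaches_of_occursAt_chaseInst_base hv
    by_cases ha : occursAt I₀ τ.dst a
    · exact occursAt_chaseInst_base ha
    rcases hr.trans hSu (.of_mem hτ) with rfl | ⟨τ', hτ', rfl, hdst⟩
    · exact absurd hra ha
    · exact (Created.root a _ ⟨τ', hτ', hdst, hra⟩ ha).occursAt_chaseInst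
  | null x p r =>
    obtain ⟨hx, hrel, hne, hr⟩ := created_of_occursAt_chaseInst_null hv
    rcases hr.trans hSu (.of_mem hτ) with rfl | hUID
    · exact hx.occursAt_chaseInst_null hrel hne
    · exact (Created.step x p r _ hx hrel hne hUID).occursAt_chaseInst

lemma Created.not_occursAt_of_base {a : ℕ} {p : σ.Pos} (ha : Created I₀ Su (CEl.base a) p) :
    ¬ occursAt I₀ p a := by
  cases ha with
  | root _ _ _ hnot => exact hnot

lemma not_created_null_self (x : CEl σ) (p r : σ.Pos) : ¬ Created I₀ Su (CEl.null x p r) r := by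
  intro h
  cases h with
  | step _ _ _ _ _ _ _ hUID =>
    obtain ⟨τ, _, hsrc, hdst⟩ := hUID
    exact τ.ne (hsrc.trans hdst.symm)

lemma base_ne_chaseTuple {R : σ.Rel} {t₀ : Fin (σ.ar R) → ℕ} {x : CEl σ} {i : Fin (σ.ar R)}
    (ht₀ : (⟨R, t₀⟩ : Fact σ ℕ) ∈ I₀) (hx : Created I₀ Su x ⟨R, i⟩) (u : Fin (σ.ar R)) :
    CEl.base (t₀ u) ≠ chaseTuple x i u := by
  intro heq
  by_cases hui : u = i
  · subst hui
    obtain rfl : CEl.base (t₀ u) = x := heq.trans (chaseTuple_self x u)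
    exact hx.not_occursAt_of_base ⟨t₀, ht₀, rfl⟩
  · cases heq.trans (chaseTuple_of_ne x hui)

lemma chaseTuple_eq_of_apply_eq {R : σ.Rel} {x y : CEl σ} {i j : Fin (σ.ar R)}
    (hx : Created I₀ Su x ⟨R, i⟩) (hy : Created I₀ Su y ⟨R, j⟩) {u : Fin (σ.ar R)}
    (heq : chaseTuple x i u = chaseTuple y j u) :
    chaseTuple x i = chaseTuple y j := by
  simp only [chaseTuple] at heq
  split_ifs at heq with hi hj hj
  · rw [heq, ← hi, ← hj]
  · subst hi heq
    exact absurd hx (not_created_null_self y ⟨R, j⟩ ⟨R, u⟩)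
  · subst hj heq
    exact absurd hy (not_created_null_self x ⟨R, i⟩ ⟨R, u⟩)
  · cases heq
    rfl

lemma satUFD_chaseInst {φ : UFD σ} (hφ : satUFD I₀ φ) : satUFD (chaseInst I₀ Su) φ := by
  intro t s ht hs hts
  rcases mem_chaseInst_iff.1 ht with ⟨t₀, ht₀, rfl⟩ | ⟨x, i, hx, rfl⟩ <;>
    rcases mem_chaseInst_iff.1 hs with ⟨s₀, hs₀, rfl⟩ | ⟨y, j, hy, rfl⟩
  · exact congrArg CEl.base (hφ t₀ s₀ ht₀ hs₀ (CEl.base.inj hts))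
  · exact absurd hts (base_ne_chaseTuple ht₀ hy φ.src)
  · exact absurd hts.symm (base_ne_chaseTuple hs₀ hx φ.src)
  · exact congrFun (chaseTuple_eq_of_apply_eq hx hy hts) φ.dst

/-- The length of the chain of creations that leads from a base element to a chase element. -/
def CEl.depth : CEl σ → ℕ
  | CEl.base _ => 0
  | CEl.null x _ _ => x.depth + 1

lemma depth_chaseTuple (x : CEl σ) {R : σ.Rel} (i j : Fin (σ.ar R)) :
    x.depth ≤ (chaseTuple x i j).depth ∧ (chaseTuple x i j).depth ≤ x.depth + 1 := by
  by_cases hji : j = i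
  · rw [hji, chaseTuple_self]
    omega
  · rw [chaseTuple_of_ne x hji, CEl.depth]
    omega

lemma depth_le_depth_add_one_of_mem_chaseInst {R : σ.Rel} {t : Fin (σ.ar R) → CEl σ}
    (ht : (⟨R, t⟩ : Fact σ (CEl σ)) ∈ chaseInst I₀ Su) (i j : Fin (σ.ar R)) :
    (t j).depth ≤ (t i).depth + 1 := by
  rcases mem_chaseInst_iff.1 ht with ⟨t₀, _, rfl⟩ | ⟨x, l, _, rfl⟩
  · exact Nat.zero_le _
  · exact (depth_chaseTuple x l j).2.trans
      (Nat.succ_le_succ (depth_chaseTuple x l i).1)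

/-- The facts of the chase that contain an element of depth less than `N`. -/
def truncChase (I₀ : Inst σ ℕ) (Su : Set (UID σ)) (N : ℕ) : Inst σ (CEl σ) :=
  {F ∈ chaseInst I₀ Su | ∃ i, (F.2 i).depth < N}

lemma occursAt_truncChase {N : ℕ} {p : σ.Pos} {v : CEl σ}
    (hv : occursAt (chaseInst I₀ Su) p v) (hdepth : v.depth < N) :
    occursAt (truncChase I₀ Su N) p v := by
  obtain ⟨t, ht, rfl⟩ := hv
  exact ⟨t, ⟨ht, p.2, hdepth⟩, rfl⟩

lemma occursAt_chaseInst_of_truncChase {N : ℕ} {p : σ.Pos} {v : CEl σ}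
    (hv : occursAt (truncChase I₀ Su N) p v) : occursAt (chaseInst I₀ Su) p v := by
  obtain ⟨t, ht, rfl⟩ := hv
  exact ⟨t, ht.1, rfl⟩

lemma finite_created_depth_lt (hI₀ : I₀.Finite) (Su : Set (UID σ)) (N : ℕ) :
    {x : CEl σ | (∃ p, Created I₀ Su x p) ∧ x.depth < N}.Finite := by
  have := σ.rel_fin
  induction N with
  | zero => simp only [not_lt_zero, and_false, Set.ofPred_false, Set.finite_empty]
  | succ N ih =>
    have bases := (activeDom_finite hI₀).image (CEl.base (σ := σ))
    have nulls := (ih.prod (Set.finite_univ (α := σ.Pos × σ.Pos))).image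
      fun y => CEl.null y.1 y.2.1 y.2.2
    refine (bases.union nulls).subset ?_
    rintro x ⟨⟨p, hx⟩, hdepth⟩
    cases hx with
    | root a _ hsrc _ =>
      obtain ⟨τ, _, _, t, ht, hta⟩ := hsrc
      exact Or.inl ⟨a, ⟨_, ht, _, hta⟩, rfl⟩
    | step y p' r _ hy _ _ _ =>
      exact Or.inr ⟨(y, p', r), ⟨⟨⟨p', hy⟩, Nat.lt_of_succ_lt_succ hdepth⟩, trivial⟩, rfl⟩

lemma truncChase_finite (hI₀ : I₀.Finite) (Su : Set (UID σ)) (N : ℕ) :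
    (truncChase I₀ Su N).Finite := by
  have := σ.rel_fin
  have bases : (Inst.map (CEl.base (σ := σ)) I₀).Finite := hI₀.image _
  have created := ((finite_created_depth_lt hI₀ Su N).prod (Set.finite_univ (α := σ.Pos))).image
    fun y => (⟨y.2.1, chaseTuple y.1 y.2.2⟩ : Fact σ (CEl σ))
  refine (bases.union created).subset ?_
  rintro F ⟨⟨F₀, hF₀, rfl⟩ | ⟨x, p, hx, rfl⟩, i, hi⟩
  · exact Or.inl ⟨F₀, hF₀, rfl⟩
  · have hdepth := (depth_chaseTuple x p.2 i).1.trans_lt hi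
    exact Or.inr ⟨(x, p), ⟨⟨⟨p, hx⟩, hdepth⟩, trivial⟩, rfl⟩

lemma base_mem_truncChase {N : ℕ} (hN : 0 < N) {R : σ.Rel} {t : Fin (σ.ar R) → ℕ}
    (ht : (⟨R, t⟩ : Fact σ ℕ) ∈ I₀) :
    (⟨R, fun i => CEl.base (t i)⟩ : Fact σ (CEl σ)) ∈ truncChase I₀ Su N :=
  ⟨Or.inl ⟨_, ht, rfl⟩, ⟨0, σ.ar_pos R⟩, hN⟩

open Classical in
/-- The homomorphism from the chase to a superinstance `M` of `I₀` satisfying the UIDs: each null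
is sent to the matching entry of a chosen fact of `M` that contains the image of its parent. -/
noncomputable def chaseHom (M : Inst σ ℕ) : CEl σ → ℕ
  | CEl.base a => a
  | CEl.null x p r =>
    if h : occursAt M p (chaseHom M x) ∧ r.1 = p.1 then
      h.1.choose (Fin.cast (congrArg σ.ar h.2) r.2)
    else 0

variable {M : Inst σ ℕ}

lemma chaseHom_chaseTuple_mem {x : CEl σ} {p : σ.Pos} (hx : occursAt M p (chaseHom M x)) :
    (⟨p.1, fun i => chaseHom M (chaseTuple x p.2 i)⟩ : Fact σ ℕ) ∈ M := by
  have tuple_eq : (fun i => chaseHom M (chaseTuple x p.2 i)) = hx.choose := by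
    funext i
    by_cases hi : i = p.2
    · rw [hi, chaseTuple_self]
      exact hx.choose_spec.2.symm
    · rw [chaseTuple_of_ne x hi, chaseHom, dif_pos ⟨hx, rfl⟩, Fin.cast_refl, id]
  rw [tuple_eq]
  exact hx.choose_spec.1

lemma Created.occursAt_chaseHom (hI₀ : I₀ ⊆ M) (hSu : ∀ τ ∈ Su, satUID M τ) {x : CEl σ}
    {p : σ.Pos} (hx : Created I₀ Su x p) : occursAt M p (chaseHom M x) := by
  induction hx with
  | root a p hsrc _ =>
    obtain ⟨τ, hτ, rfl, t, ht, hta⟩ := hsrc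
    exact hSu τ hτ _ ⟨t, hI₀ ht, by rw [hta, chaseHom]⟩
  | step x p r q _ hrel hne hUID ih =>
    refine occursAt_of_uidReaches hSu (Or.inr hUID) ?_
    obtain ⟨R, i⟩ := p
    obtain ⟨R', j⟩ := r
    obtain rfl : R' = R := hrel
    have hmem := chaseHom_chaseTuple_mem ih
    refine ⟨_, hmem, congrArg _ (chaseTuple_of_ne x fun hji => hne (congrArg _ hji))⟩

lemma chaseHom_mem_of_mem_chaseInst (hI₀ : I₀ ⊆ M) (hSu : ∀ τ ∈ Su, satUID M τ) {R : σ.Rel}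
    {t : Fin (σ.ar R) → CEl σ} (ht : (⟨R, t⟩ : Fact σ (CEl σ)) ∈ chaseInst I₀ Su) :
    (⟨R, fun i => chaseHom M (t i)⟩ : Fact σ ℕ) ∈ M := by
  rcases mem_chaseInst_iff.1 ht with ⟨t₀, ht₀, rfl⟩ | ⟨x, i, hx, rfl⟩
  · simpa only [chaseHom] using hI₀ ht₀
  · exact chaseHom_chaseTuple_mem (hx.occursAt_chaseHom hI₀ hSu)

end Chase

section Completion

variable {δ γ : Type} (Su : Set (UID σ)) (Sf : Set (UFD σ)) {J : Inst σ δ}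

lemma exists_injective_nat_extending_enumeration {S : Set γ} (hS : S.Finite) {f : ℕ → γ}
    (hf : Function.Injective f) (hfS : ∀ n, f n ∉ S) :
    ∃ e : ℕ → γ, Function.Injective e ∧ e '' Set.Iio S.ncard = S ∧
      ∀ n, e (S.ncard + n) = f n := by
  have : Finite S := hS
  let ε : Fin S.ncard ≃ S := (Finite.equivFin S).symm
  let e : ℕ → γ := fun n => if h : n < S.ncard then ε ⟨n, h⟩ else f (n - S.ncard)
  have e_lt : ∀ n (h : n < S.ncard), e n = ε ⟨n, h⟩ := fun n h => dif_pos h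
  have e_add : ∀ n, e (S.ncard + n) = f n := fun n => by simp [e]
  refine ⟨e, ?_, ?_, e_add⟩
  · intro m n hmn
    rcases lt_or_ge m S.ncard with hm | hm <;> rcases lt_or_ge n S.ncard with hn | hn
    · rw [e_lt m hm, e_lt n hn] at hmn
      simpa using ε.injective (Subtype.ext hmn)
    · obtain ⟨n, rfl⟩ := Nat.exists_eq_add_of_le hn
      rw [e_lt m hm, e_add] at hmn
      exact absurd (hmn ▸ (ε ⟨m, hm⟩).2) (hfS n)
    · obtain ⟨m, rfl⟩ := Nat.exists_eq_add_of_le hm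
      rw [e_lt n hn, e_add] at hmn
      exact absurd (hmn ▸ (ε ⟨n, hn⟩).2) (hfS m)
    · obtain ⟨m, rfl⟩ := Nat.exists_eq_add_of_le hm
      obtain ⟨n, rfl⟩ := Nat.exists_eq_add_of_le hn
      rw [e_add, e_add] at hmn
      rw [hf hmn]
  · ext v
    constructor
    · rintro ⟨n, hn, rfl⟩
      exact e_lt n hn ▸ (ε ⟨n, hn⟩).2
    · intro hv
      refine ⟨ε.symm ⟨v, hv⟩, (ε.symm ⟨v, hv⟩).2, ?_⟩
      rw [e_lt _ (ε.symm ⟨v, hv⟩).2, Fin.eta, Equiv.apply_symm_apply]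

/-- The domain of the completion of an instance over `δ`: the elements of `δ`, and an infinite
supply of fresh elements for each class of positions. -/
abbrev Padded (σ : Sig) (δ : Type) : Type := δ ⊕ Set σ.Pos × ℕ

/-- The `n`-th fresh element for the class of the position `p`. -/
def fresh (Su : Set (UID σ)) (p : σ.Pos) (n : ℕ) : Padded σ δ := Sum.inr (posClass Su p, n)

/-- The `R`-fact whose entries are the `0`-th fresh elements. -/
def templateFact (Su : Set (UID σ)) (R : σ.Rel) : Fact σ (Padded σ δ) :=
  ⟨R, fun i => fresh Su ⟨R, i⟩ 0⟩

/-- The instance `J` together with the template fact of each relation. -/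
def withTemplates (J : Inst σ δ) : Inst σ (Padded σ δ) :=
  Inst.map Sum.inl J ∪ Set.range (templateFact Su)

lemma mem_withTemplates_iff {R : σ.Rel} {t : Fin (σ.ar R) → Padded σ δ} :
    (⟨R, t⟩ : Fact σ (Padded σ δ)) ∈ withTemplates Su J ↔
      (⟨R, t⟩ : Fact σ (Padded σ δ)) ∈ Inst.map Sum.inl J ∨ t = fun i => fresh Su ⟨R, i⟩ 0 := by
  refine or_congr_right ⟨?_, ?_⟩
  · rintro ⟨R', heq⟩
    cases heq
    rfl
  · rintro rfl
    exact ⟨R, rfl⟩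

lemma valuesAt_withTemplates (p : σ.Pos) :
    valuesAt (withTemplates Su J) p = Sum.inl '' valuesAt J p ∪ {fresh Su p 0} := by
  ext v
  constructor
  · rintro ⟨t, ht, rfl⟩
    rcases (mem_withTemplates_iff Su).1 ht with ht | rfl
    · obtain ⟨s, hs, rfl⟩ := mem_map_iff.1 ht
      exact Or.inl ⟨_, ⟨s, hs, rfl⟩, rfl⟩
    · exact Or.inr rfl
  · rintro (⟨_, ⟨s, hs, rfl⟩, rfl⟩ | rfl)
    · exact ⟨_, Or.inl ⟨_, hs, rfl⟩, rfl⟩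
    · exact ⟨_, Or.inr ⟨p.1, rfl⟩, rfl⟩

lemma satUFD_withTemplates {φ : UFD σ} (hφ : satUFD J φ) : satUFD (withTemplates Su J) φ := by
  have hmap := satUFD_map (Sum.inl_injective (β := Set σ.Pos × ℕ)).injOn hφ
  intro t s ht hs hts
  rcases (mem_withTemplates_iff Su).1 ht with ht | rfl <;>
    rcases (mem_withTemplates_iff Su).1 hs with hs | rfl
  · exact hmap t s ht hs hts
  · obtain ⟨_, _, rfl⟩ := mem_map_iff.1 ht
    cases hts
  · obtain ⟨_, _, rfl⟩ := mem_map_iff.1 hs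
    cases hts
  · rfl

/-- The elements of `J` that the UIDs require at position `p`. -/
def classValues (J : Inst σ δ) (p : σ.Pos) : Set δ := {v | ∃ q ∈ posClass Su p, occursAt J q v}

/-- The elements of `J` that the UIDs require at position `p` and that do not occur there. -/
def missing (J : Inst σ δ) (p : σ.Pos) : Set δ := classValues Su J p \ valuesAt J p

lemma valuesAt_subset_classValues (J : Inst σ δ) (p : σ.Pos) :
    valuesAt J p ⊆ classValues Su J p := fun _ hv => ⟨p, .refl Su p, hv⟩

lemma classValues_subset_activeDom (J : Inst σ δ) (p : σ.Pos) :
    classValues Su J p ⊆ activeDom J := by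
  rintro v ⟨q, _, hv⟩
  exact valuesAt_subset_activeDom J q hv

/-- The number of further values that position `p` takes in the completion of `J`. It depends
only on the number of values at `p` in `J`, so positions that determine each other have the same
quota. -/
noncomputable def quota (J : Inst σ δ) (p : σ.Pos) : ℕ :=
  (activeDom J).ncard - (valuesAt J p).ncard

/-- The number of fresh elements needed to bring the size of the class of `p` up to that of the
active domain of `J`. -/
noncomputable def freshQuota (J : Inst σ δ) (p : σ.Pos) : ℕ :=
  (activeDom J).ncard - (classValues Su J p).ncard

lemma missing_finite (hJ : J.Finite) (p : σ.Pos) : (missing Su J p).Finite :=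
  (activeDom_finite hJ).subset (Set.sdiff_subset.trans (classValues_subset_activeDom Su J p))

lemma quota_eq_ncard_missing_add (hJ : J.Finite) (p : σ.Pos) :
    quota J p = (missing Su J p).ncard + freshQuota Su J p := by
  have classValues_finite := (activeDom_finite hJ).subset (classValues_subset_activeDom Su J p)
  have h₁ := Set.ncard_sdiff_add_ncard_of_subset (valuesAt_subset_classValues Su J p)
    classValues_finite
  have h₂ := Set.ncard_le_ncard (classValues_subset_activeDom Su J p) (activeDom_finite hJ)
  simp only [quota, freshQuota, missing]
  omega

lemma exists_enumeration_missing_fresh (hJ : J.Finite) (p : σ.Pos) :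
    ∃ e : ℕ → Padded σ δ, Function.Injective e ∧
      e '' Set.Iio (missing Su J p).ncard = Sum.inl '' missing Su J p ∧
      ∀ n, e ((missing Su J p).ncard + n) = fresh Su p (n + 1) := by
  have fresh_injective : Function.Injective fun n => (fresh Su p (n + 1) : Padded σ δ) :=
    fun m n hmn => by simpa [fresh] using hmn
  have h := exists_injective_nat_extending_enumeration
    ((missing_finite Su hJ p).image Sum.inl) fresh_injective fun n => by simp [fresh]
  rwa [Set.ncard_image_of_injective _ Sum.inl_injective] at h

variable (hJ : J.Finite)

/-- An enumeration of the values that padding adds at position `p`: first the missing elements,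
then the fresh elements other than the `0`-th one. -/
noncomputable def newValue (p : σ.Pos) : ℕ → Padded σ δ :=
  (exists_enumeration_missing_fresh Su hJ p).choose

lemma newValue_injective (p : σ.Pos) : Function.Injective (newValue Su hJ p) :=
  (exists_enumeration_missing_fresh Su hJ p).choose_spec.1

lemma image_newValue_Iio (p : σ.Pos) (n : ℕ) :
    newValue Su hJ p '' Set.Iio ((missing Su J p).ncard + n) =
      Sum.inl '' missing Su J p ∪ (fun m => fresh Su p (m + 1)) '' Set.Iio n := by
  obtain ⟨-, himage, hfresh⟩ := (exists_enumeration_missing_fresh Su hJ p).choose_spec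
  have hIio : Set.Iio ((missing Su J p).ncard + n) =
      Set.Iio (missing Su J p).ncard ∪ ((missing Su J p).ncard + ·) '' Set.Iio n := by
    ext j
    simp only [Set.mem_Iio, Set.mem_union, Set.mem_image]
    refine ⟨fun hj => ?_, by omega⟩
    rcases lt_or_ge j (missing Su J p).ncard with hlt | hge
    · exact Or.inl hlt
    · exact Or.inr ⟨j - (missing Su J p).ncard, by omega, by omega⟩
  rw [hIio, Set.image_union, Set.image_image]
  exact congrArg₂ _ himage (Set.image_congr fun m _ => hfresh m)

lemma newValue_mem (p : σ.Pos) (n : ℕ) :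
    newValue Su hJ p n ∈
      Sum.inl '' missing Su J p ∪ Set.range fun m => (fresh Su p (m + 1) : Padded σ δ) := by
  have h : newValue Su hJ p n ∈ newValue Su hJ p '' Set.Iio ((missing Su J p).ncard + (n + 1)) :=
    ⟨n, Set.mem_Iio.2 (by omega), rfl⟩
  rw [image_newValue_Iio] at h
  exact Set.union_subset_union_right _ (Set.image_subset_range _ _) h

lemma newValue_notMem_valuesAt_withTemplates (p : σ.Pos) (n : ℕ) :
    newValue Su hJ p n ∉ valuesAt (withTemplates Su J) p := by
  rw [valuesAt_withTemplates]
  rcases newValue_mem Su hJ p n with ⟨v, hv, heq⟩ | ⟨m, heq⟩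
  · rw [← heq]
    rintro (⟨w, hw, hwv⟩ | hfresh)
    · exact hv.2 (Sum.inl_injective hwv ▸ hw)
    · cases hfresh
  · rw [← heq]
    rintro (⟨w, _, hw⟩ | hfresh)
    · cases hw
    · simp [fresh] at hfresh

/-- The `j`-th padding fact of `R` reuses the template value at position `i`: this happens when
some position of the UIDs that has exhausted its quota determines `i`. -/
def Reused (J : Inst σ δ) (R : σ.Rel) (j : ℕ) (i : Fin (σ.ar R)) : Prop :=
  ∃ l, occursInUIDs Su ⟨R, l⟩ ∧ quota J ⟨R, l⟩ ≤ j ∧ Determines Sf R l i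

lemma Reused.of_determines (hSf : TransClosedUFD Sf) {R : σ.Rel} {j : ℕ} {i l : Fin (σ.ar R)}
    (hi : Reused Su Sf J R j i) (hil : Determines Sf R i l) : Reused Su Sf J R j l := by
  obtain ⟨m, hm, hquota, hmi⟩ := hi
  exact ⟨m, hm, hquota, hmi.trans hSf hil⟩

lemma reused_iff_quota_le (hrev : Reversible Su Sf) (hJ : J.Finite) (hSf : ∀ φ ∈ Sf, satUFD J φ)
    {R : σ.Rel} {j : ℕ} {i : Fin (σ.ar R)} (hi : occursInUIDs Su ⟨R, i⟩) :
    Reused Su Sf J R j i ↔ quota J ⟨R, i⟩ ≤ j := by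
  refine ⟨?_, fun hquota => ⟨i, hi, hquota, Or.inl rfl⟩⟩
  rintro ⟨l, hl, hquota, hli⟩
  rwa [quota, ← ncard_valuesAt_eq_of_determines hrev hJ hSf hli hl hi]

open Classical in
/-- The tuple of the `j`-th padding fact of `R`. -/
noncomputable def padTuple (R : σ.Rel) (j : ℕ) : Fin (σ.ar R) → Padded σ δ := fun i =>
  if Reused Su Sf J R j i then fresh Su ⟨R, i⟩ 0 else newValue Su hJ ⟨R, i⟩ j

lemma padTuple_of_reused {R : σ.Rel} {j : ℕ} {i : Fin (σ.ar R)} (hi : Reused Su Sf J R j i) :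
    padTuple Su Sf hJ R j i = fresh Su ⟨R, i⟩ 0 := if_pos hi

lemma padTuple_of_not_reused {R : σ.Rel} {j : ℕ} {i : Fin (σ.ar R)}
    (hi : ¬ Reused Su Sf J R j i) : padTuple Su Sf hJ R j i = newValue Su hJ ⟨R, i⟩ j := if_neg hi

/-- The finite model of the UIDs and UFDs obtained from `J` by adding, for each relation, its
template fact and as many padding facts as `J` has elements. -/
def completion : Inst σ (Padded σ δ) :=
  withTemplates Su J ∪
    {F | ∃ R, ∃ j < (activeDom J).ncard, F = ⟨R, padTuple Su Sf hJ R j⟩}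

lemma mem_completion_iff {R : σ.Rel} {t : Fin (σ.ar R) → Padded σ δ} :
    (⟨R, t⟩ : Fact σ (Padded σ δ)) ∈ completion Su Sf hJ ↔
      (⟨R, t⟩ : Fact σ (Padded σ δ)) ∈ withTemplates Su J ∨
        ∃ j < (activeDom J).ncard, t = padTuple Su Sf hJ R j := by
  refine or_congr_right ⟨?_, ?_⟩
  · rintro ⟨R', j, hj, heq⟩
    cases heq
    exact ⟨j, hj, rfl⟩
  · rintro ⟨j, hj, rfl⟩
    exact ⟨R, j, hj, rfl⟩

lemma completion_finite : (completion Su Sf hJ).Finite := by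
  have := σ.rel_fin
  have padding := ((Set.finite_univ (α := σ.Rel)).prod (Set.finite_Iio (activeDom J).ncard)).image
    fun y => (⟨y.1, padTuple Su Sf hJ y.1 y.2⟩ : Fact σ (Padded σ δ))
  refine ((hJ.image _).union (Set.finite_range _)).union (padding.subset ?_)
  rintro F ⟨R, j, hj, rfl⟩
  exact ⟨(R, j), ⟨trivial, hj⟩, rfl⟩

lemma map_inl_subset_completion : Inst.map Sum.inl J ⊆ completion Su Sf hJ :=
  fun _ hF => Or.inl (Or.inl hF)

/-- The values taken in the completion of `J` by every position in the class of `p`. -/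
def classDomain (J : Inst σ δ) (p : σ.Pos) : Set (Padded σ δ) :=
  Sum.inl '' classValues Su J p ∪ fresh Su p '' Set.Iic (freshQuota Su J p)

lemma classDomain_eq_of_posClass_eq {p q : σ.Pos} (hpq : posClass Su p = posClass Su q) :
    classDomain Su J p = classDomain Su J q := by
  have hfresh : (fresh Su p : ℕ → Padded σ δ) = fresh Su q :=
    funext fun n => by simp only [fresh, hpq]
  simp only [classDomain, freshQuota, classValues, hpq, hfresh]

lemma classDomain_eq_union_newValue (p : σ.Pos) :
    classDomain Su J p =
      valuesAt (withTemplates Su J) p ∪ newValue Su hJ p '' Set.Iio (quota J p) := by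
  have hfresh : (fresh Su p : ℕ → Padded σ δ) '' Set.Iic (freshQuota Su J p) =
      {fresh Su p 0} ∪ (fun m => fresh Su p (m + 1)) '' Set.Iio (freshQuota Su J p) := by
    ext v
    constructor
    · rintro ⟨_ | n, hn, rfl⟩
      · exact Or.inl rfl
      · exact Or.inr ⟨n, hn, rfl⟩
    · rintro (rfl | ⟨n, hn, rfl⟩)
      · exact ⟨0, Nat.zero_le _, rfl⟩
      · exact ⟨n + 1, hn, rfl⟩
  rw [quota_eq_ncard_missing_add Su hJ, image_newValue_Iio, valuesAt_withTemplates, classDomain,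
    hfresh, Set.union_union_union_comm, ← Set.image_union, missing,
    Set.union_sdiff_cancel (valuesAt_subset_classValues Su J p)]

variable {Su Sf}

lemma valuesAt_completion (hrev : Reversible Su Sf) (hSf : ∀ φ ∈ Sf, satUFD J φ) {p : σ.Pos}
    (hp : occursInUIDs Su p) : valuesAt (completion Su Sf hJ) p = classDomain Su J p := by
  obtain ⟨R, i⟩ := p
  have reused_iff {j : ℕ} := reused_iff_quota_le Su Sf hrev hJ hSf (j := j) hp
  rw [classDomain_eq_union_newValue Su hJ]
  ext v
  constructor
  · rintro ⟨t, ht, rfl⟩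
    rcases (mem_completion_iff Su Sf hJ).1 ht with ht | ⟨j, -, rfl⟩
    · exact Or.inl ⟨t, ht, rfl⟩
    by_cases hj : Reused Su Sf J R j i
    · rw [padTuple_of_reused Su Sf hJ hj]
      exact Or.inl ⟨_, Or.inr ⟨R, rfl⟩, rfl⟩
    · rw [padTuple_of_not_reused Su Sf hJ hj]
      exact Or.inr ⟨j, not_le.1 (mt reused_iff.2 hj), rfl⟩
  · rintro (⟨t, ht, rfl⟩ | ⟨j, hj, rfl⟩)
    · exact ⟨t, Or.inl ht, rfl⟩
    · exact ⟨padTuple Su Sf hJ R j, Or.inr ⟨R, j, lt_of_lt_of_le hj (Nat.sub_le _ _), rfl⟩,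
        padTuple_of_not_reused Su Sf hJ (mt reused_iff.1 (not_le.2 hj))⟩

lemma satUID_completion (hrev : Reversible Su Sf) (hSf : ∀ φ ∈ Sf, satUFD J φ) {τ : UID σ}
    (hτ : τ ∈ Su) : satUID (completion Su Sf hJ) τ := by
  suffices h : valuesAt (completion Su Sf hJ) τ.src = valuesAt (completion Su Sf hJ) τ.dst from
    h.subset
  rw [valuesAt_completion hJ hrev hSf ⟨τ, hτ, Or.inl rfl⟩,
    valuesAt_completion hJ hrev hSf ⟨τ, hτ, Or.inr rfl⟩]
  exact classDomain_eq_of_posClass_eq Su ((posClass_eq_iff hrev.1 hrev.2.2.1).2 (.of_mem hτ))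

lemma exists_withTemplates_or_padTuple_of_mem_completion (hSf : TransClosedUFD Sf) {R : σ.Rel}
    {t : Fin (σ.ar R) → Padded σ δ}
    (ht : (⟨R, t⟩ : Fact σ (Padded σ δ)) ∈ completion Su Sf hJ) {i l : Fin (σ.ar R)}
    (hil : Determines Sf R i l) :
    (∃ s, (⟨R, s⟩ : Fact σ (Padded σ δ)) ∈ withTemplates Su J ∧ s i = t i ∧ s l = t l) ∨
      ∃ j, t = padTuple Su Sf hJ R j ∧ t i = newValue Su hJ ⟨R, i⟩ j := by
  rcases (mem_completion_iff Su Sf hJ).1 ht with ht | ⟨j, -, rfl⟩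
  · exact Or.inl ⟨t, ht, rfl, rfl⟩
  by_cases hi : Reused Su Sf J R j i
  · exact Or.inl ⟨_, Or.inr ⟨R, rfl⟩, (padTuple_of_reused Su Sf hJ hi).symm,
      (padTuple_of_reused Su Sf hJ (hi.of_determines Su Sf hSf hil)).symm⟩
  · exact Or.inr ⟨j, rfl, padTuple_of_not_reused Su Sf hJ hi⟩

lemma satUFD_completion (hSf : TransClosedUFD Sf) {φ : UFD σ} (hφ : φ ∈ Sf) (hφJ : satUFD J φ) :
    satUFD (completion Su Sf hJ) φ := by
  have hdet : Determines Sf φ.rel φ.src φ.dst := Or.inr ⟨φ.ne, hφ⟩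
  have hnew := newValue_notMem_valuesAt_withTemplates Su hJ ⟨φ.rel, φ.src⟩
  intro t s ht hs hts
  rcases exists_withTemplates_or_padTuple_of_mem_completion hJ hSf ht hdet with
      ⟨t', ht', htsrc, htdst⟩ | ⟨j, rfl, htj⟩ <;>
    rcases exists_withTemplates_or_padTuple_of_mem_completion hJ hSf hs hdet with
      ⟨s', hs', hssrc, hsdst⟩ | ⟨l, rfl, hsl⟩
  · rw [← htdst, ← hsdst]
    exact satUFD_withTemplates Su hφJ t' s' ht' hs' (htsrc.trans (hts.trans hssrc.symm))
  · exact absurd ⟨t', ht', htsrc.trans (hts.trans hsl)⟩ (hnew l)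
  · exact absurd ⟨s', hs', hssrc.trans (hts.symm.trans htj)⟩ (hnew j)
  · rw [newValue_injective Su hJ _ (htj.symm.trans (hts.trans hsl))]

lemma mem_map_inl_or_missing_or_fresh_of_mem_completion {R : σ.Rel}
    {t : Fin (σ.ar R) → Padded σ δ}
    (ht : (⟨R, t⟩ : Fact σ (Padded σ δ)) ∈ completion Su Sf hJ) :
    (⟨R, t⟩ : Fact σ (Padded σ δ)) ∈ Inst.map Sum.inl J ∨
      ∀ i, t i ∈ Sum.inl '' missing Su J ⟨R, i⟩ ∪ Set.range (fresh Su ⟨R, i⟩) := by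
  rcases (mem_completion_iff Su Sf hJ).1 ht with ht | ⟨j, -, rfl⟩
  · refine ((mem_withTemplates_iff Su).1 ht).imp_right ?_
    rintro rfl i
    exact Or.inr ⟨0, rfl⟩
  refine Or.inr fun i => ?_
  by_cases hi : Reused Su Sf J R j i
  · rw [padTuple_of_reused Su Sf hJ hi]
    exact Or.inr ⟨0, rfl⟩
  · rw [padTuple_of_not_reused Su Sf hJ hi]
    refine (newValue_mem Su hJ ⟨R, i⟩ j).imp_right ?_
    rintro ⟨m, hm⟩
    exact ⟨m + 1, hm⟩

lemma mem_classValues_of_occursAt_completion {p : σ.Pos} {v : δ}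
    (hv : occursAt (completion Su Sf hJ) p (Sum.inl v)) : v ∈ classValues Su J p := by
  obtain ⟨t, ht, htv⟩ := hv
  rcases mem_map_inl_or_missing_or_fresh_of_mem_completion hJ ht with ht | ht
  · obtain ⟨s, hs, rfl⟩ := mem_map_iff.1 ht
    exact valuesAt_subset_classValues Su J p ⟨s, hs, Sum.inl_injective htv⟩
  · rcases htv ▸ ht p.2 with ⟨w, hw, heq⟩ | ⟨n, hn⟩
    · exact Sum.inl_injective heq ▸ hw.1
    · cases hn

lemma eq_posClass_of_occursAt_completion {p : σ.Pos} {c : Set σ.Pos × ℕ}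
    (hc : occursAt (completion Su Sf hJ) p (Sum.inr c)) : c.1 = posClass Su p := by
  obtain ⟨t, ht, htc⟩ := hc
  rcases mem_map_inl_or_missing_or_fresh_of_mem_completion hJ ht with ht | ht
  · obtain ⟨s, -, rfl⟩ := mem_map_iff.1 ht
    cases htc
  · rcases htc ▸ ht p.2 with ⟨w, -, heq⟩ | ⟨n, hn⟩
    · cases heq
    · exact congrArg Prod.fst (Sum.inr_injective hn.symm)

end Completion

section Acyclicity

variable {V γ : Type} {ι : Type*}

/-- Berge cycles of an arbitrary incidence relation between vertices and (hyper)edges. -/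
def HasIncidenceCycle (inc : V → ι → Prop) : Prop :=
  ∃ m : ℕ, ∃ A : Fin (m + 2) → ι, Function.Injective A ∧
    ∃ x : Fin (m + 2) → V, Function.Injective x ∧ ∀ i, inc (x i) (A i) ∧ inc (x i) (A (i + 1))

lemma injective_window {A : ℕ → ι} {s n : ℕ} (hA : ∀ i j, i < j → j < i + n → A i ≠ A j) :
    Function.Injective fun i : Fin n => A (s + i) :=
  Function.Injective.of_lt_imp_ne fun i j hij => hA _ _ (by omega) (by omega)

lemma hasIncidenceCycle_of_closed_window {inc : V → ι → Prop} {A : ℕ → ι} {x : ℕ → V}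
    (hinc : ∀ n, inc (x n) (A n) ∧ inc (x n) (A (n + 1))) {s m : ℕ}
    (hA : ∀ i j, i < j → j < i + (m + 2) → A i ≠ A j)
    (hx : ∀ i j, i < j → j < i + (m + 2) → x i ≠ x j)
    (hclosed : inc (x (s + (m + 1))) (A s)) : HasIncidenceCycle inc := by
  refine ⟨m, fun i => A (s + i), injective_window hA, fun i => x (s + i), injective_window hx,
    fun i => ⟨(hinc _).1, ?_⟩⟩
  simp only [Fin.val_add_one]
  split_ifs with hi
  · rwa [hi]
  · exact (hinc _).2

lemma hasIncidenceCycle_of_walk {inc : V → ι → Prop} {A : ℕ → ι} {x : ℕ → V}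
    (hA : (Set.range A).Finite) (hinc : ∀ n, inc (x n) (A n) ∧ inc (x n) (A (n + 1)))
    (hAne : ∀ n, A n ≠ A (n + 1)) (hxne : ∀ n, x n ≠ x (n + 1)) : HasIncidenceCycle inc := by
  classical
  have eq_add_two_of_edge_eq : ∀ i j, i < j → A i = A j → ∃ d, j = i + (d + 2) := by
    intro i j hij heq
    rcases Nat.exists_eq_add_of_lt hij with ⟨_ | d, rfl⟩
    · exact absurd heq (hAne i)
    · exact ⟨d, rfl⟩
  have exists_return : ∃ m s, inc (x (s + (m + 1))) (A s) := by
    obtain ⟨i, j, hij, heq⟩ := hA.exists_lt_map_eq_of_forall_mem Set.mem_range_self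
    obtain ⟨d, rfl⟩ := eq_add_two_of_edge_eq i j hij heq
    exact ⟨d, i, heq ▸ (hinc _).2⟩
  -- In a shortest return neither an edge nor a vertex repeats, as that would give a shorter one.
  obtain ⟨s, hs⟩ := Nat.find_spec exists_return
  set m := Nat.find exists_return
  have hmin : ∀ d s, inc (x (s + (d + 1))) (A s) → m ≤ d :=
    fun d s h => Nat.find_min' exists_return ⟨s, h⟩
  have edges_ne : ∀ i j, i < j → j < i + (m + 2) → A i ≠ A j := by
    intro i j hij hj heq
    obtain ⟨d, rfl⟩ := eq_add_two_of_edge_eq i j hij heq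
    have := hmin d i (heq ▸ (hinc _).2)
    omega
  have vertices_ne : ∀ i j, i < j → j < i + (m + 2) → x i ≠ x j := by
    intro i j hij hj heq
    rcases Nat.exists_eq_add_of_lt hij with ⟨_ | d, rfl⟩
    · exact hxne i heq
    have := hmin d (i + 1) (by
      rw [show i + 1 + (d + 1) = i + (d + 1) + 1 by omega, ← heq]
      exact (hinc i).2)
    omega
  exact hasIncidenceCycle_of_closed_window hinc edges_ne vertices_ne hs

/-- The vertices that the edge `a` shares with the other edges of `S`. -/
def sharedVertices (inc : V → ι → Prop) (S : Finset ι) (a : ι) : Set V :=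
  {x | inc x a ∧ ∃ b ∈ S, b ≠ a ∧ inc x b}

lemma exists_subsingleton_sharedVertices {inc : V → ι → Prop} (hinc : ¬ HasIncidenceCycle inc)
    {S : Finset ι} (hS : S.Nonempty) : ∃ a ∈ S, (sharedVertices inc S a).Subsingleton := by
  by_contra! hshared
  have step : ∀ z : S × V, ∃ z' : S × V,
      (inc z'.2 z.1 ∧ inc z'.2 z'.1) ∧ (z.1 : ι) ≠ z'.1 ∧ z.2 ≠ z'.2 := by
    rintro ⟨⟨a, ha⟩, y⟩
    obtain ⟨x, ⟨hxa, b, hb, hba, hxb⟩, hxy⟩ := (hshared a ha).exists_ne y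
    exact ⟨(⟨b, hb⟩, x), ⟨hxa, hxb⟩, hba.symm, hxy.symm⟩
  choose next next_inc next_edge_ne next_vertex_ne using step
  obtain ⟨a, ha⟩ := hS
  obtain ⟨y, -⟩ := (hshared a ha).nonempty
  let z : ℕ → S × V := fun n => next^[n] (⟨a, ha⟩, y)
  have z_succ : ∀ n, z (n + 1) = next (z n) := fun n => Function.iterate_succ_apply' next n _
  refine hinc (hasIncidenceCycle_of_walk (A := fun n => (z n).1) (x := fun n => (z (n + 1)).2)
    (S.finite_toSet.subset (Set.range_subset_iff.2 fun n => (z n).1.2))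
    (fun n => ?_) (fun n => ?_) fun n => ?_)
  · rw [z_succ n]
    exact next_inc (z n)
  · rw [z_succ n]
    exact next_edge_ne (z n)
  · rw [z_succ (n + 1)]
    exact next_vertex_ne (z (n + 1))

/-- The variable `x` occurs in the atom with index `a`. -/
def OccursIn (atoms : ι → Fact σ V) (x : V) (a : ι) : Prop := ∃ i, (atoms a).2 i = x

lemma exists_fact_agreeing_on_sharedVertices {Su : Set (UID σ)} {M : Inst σ γ}
    (hM : ∀ τ ∈ Su, satUID M τ) (hrel : ∀ R, ∃ t, (⟨R, t⟩ : Fact σ γ) ∈ M)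
    {atoms : ι → Fact σ V} {S : Finset ι} {a : ι}
    (hleaf : (sharedVertices (OccursIn atoms) S a).Subsingleton)
    (hclass : ∀ b ∈ S, ∀ i j, (atoms b).2 j = (atoms a).2 i →
      UIDReaches Su ⟨(atoms b).1, j⟩ ⟨(atoms a).1, i⟩)
    (hinj : Function.Injective (atoms a).2) {g : V → γ}
    (hg : ∀ b ∈ S, b ≠ a → (⟨(atoms b).1, fun i => g ((atoms b).2 i)⟩ : Fact σ γ) ∈ M) :
    ∃ t, (⟨(atoms a).1, t⟩ : Fact σ γ) ∈ M ∧
      ∀ i, (atoms a).2 i ∈ sharedVertices (OccursIn atoms) S a → t i = g ((atoms a).2 i) := by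
  by_cases hshared : ∃ i, (atoms a).2 i ∈ sharedVertices (OccursIn atoms) S a
  · obtain ⟨i, hi⟩ := hshared
    have ⟨_, b, hb, hba, j, hj⟩ := hi
    obtain ⟨t, ht, hti⟩ := occursAt_of_uidReaches hM (hclass b hb i j hj) ⟨_, hg b hb hba, rfl⟩
    refine ⟨t, ht, fun i' hi' => ?_⟩
    obtain rfl : i = i' := hinj (hleaf hi hi')
    exact hti.trans (congrArg g hj)
  · obtain ⟨t, ht⟩ := hrel (atoms a).1
    exact ⟨t, ht, fun i hi => absurd ⟨i, hi⟩ hshared⟩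

lemma exists_hom_of_not_hasIncidenceCycle [Nonempty γ] {Su : Set (UID σ)} {M : Inst σ γ}
    (hM : ∀ τ ∈ Su, satUID M τ) (hrel : ∀ R, ∃ t, (⟨R, t⟩ : Fact σ γ) ∈ M)
    {atoms : ι → Fact σ V} (hacyclic : ¬ HasIncidenceCycle (OccursIn atoms))
    (hinj : ∀ a, Function.Injective (atoms a).2) (S : Finset ι)
    (hclass : ∀ a ∈ S, ∀ b ∈ S, ∀ i j, (atoms b).2 j = (atoms a).2 i →
      UIDReaches Su ⟨(atoms b).1, j⟩ ⟨(atoms a).1, i⟩) :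
    ∃ g : V → γ, ∀ a ∈ S, (⟨(atoms a).1, fun i => g ((atoms a).2 i)⟩ : Fact σ γ) ∈ M := by
  classical
  induction S using Finset.strongInduction with
  | H S ih =>
    rcases S.eq_empty_or_nonempty with rfl | hS
    · exact ⟨fun _ => Classical.arbitrary γ, by simp⟩
    obtain ⟨a, ha, hleaf⟩ := exists_subsingleton_sharedVertices hacyclic hS
    obtain ⟨g, hg⟩ := ih (S.erase a) (Finset.erase_ssubset ha) fun b hb c hc =>
      hclass b (Finset.mem_of_mem_erase hb) c (Finset.mem_of_mem_erase hc)
    obtain ⟨t, ht, htg⟩ := exists_fact_agreeing_on_sharedVertices hM hrel hleaf (hclass a ha)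
      (hinj a) fun b hb hba => hg b (Finset.mem_erase.2 ⟨hba, hb⟩)
    refine ⟨Function.extend (atoms a).2 t g, fun b hb => ?_⟩
    by_cases hba : b = a
    · subst hba
      simpa only [(hinj b).extend_apply] using ht
    have extend_eq : ∀ j, Function.extend (atoms a).2 t g ((atoms b).2 j) = g ((atoms b).2 j) := by
      intro j
      by_cases hj : ∃ i, (atoms a).2 i = (atoms b).2 j
      · obtain ⟨i, hi⟩ := hj
        rw [← hi, (hinj a).extend_apply, htg i ⟨⟨i, rfl⟩, b, hb, hba, j, hi.symm⟩]
      · exact Function.extend_apply' _ _ _ hj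
    simpa only [extend_eq] using hg b (Finset.mem_erase.2 ⟨hba, hb⟩)

end Acyclicity

section Soundness

lemma exists_unstraddled_level {ι : Type*} [Fintype ι] {κ : ι → Type*} {level : ∀ a, κ a → ℕ}
    {N : ℕ} (hcard : Fintype.card ι < N)
    (hstep : ∀ a i j, level a i < N → level a j ≤ level a i + 1) :
    ∃ d, 0 < d ∧ d ≤ N ∧ ∀ a i j, level a i < d → level a j < d := by
  by_contra! hstraddled
  have exists_straddling : ∀ d : Fin N, ∃ a, ∃ i j, level a i ≤ d ∧ (d : ℕ) < level a j := by
    intro d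
    obtain ⟨a, i, j, hi, hj⟩ := hstraddled (d + 1) d.1.succ_pos d.2
    exact ⟨a, i, j, Nat.lt_succ_iff.1 hi, hj⟩
  choose a ha using exists_straddling
  have a_injective : Function.Injective a := Function.Injective.of_lt_imp_ne fun d e hde heq => by
    obtain ⟨i, _, hi, -⟩ := ha d
    obtain ⟨_, j, -, hj⟩ := heq ▸ ha e
    have := hstep (a d) i j (hi.trans_lt d.2)
    omega
  have := Fintype.card_le_of_injective a a_injective
  rw [Fintype.card_fin] at this
  omega

/-- The query has too few atoms to reach across all levels. Below an unstraddled level the match is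
pushed into `M` by `hom`; the atoms above it only see elements that determine the class of their
positions, so they are mapped to `M` along the tree structure of the query. -/
lemma satCQ_of_graded {γ β : Type} [Nonempty β] {Su : Set (UID σ)} {I : Inst σ γ} {M : Inst σ β}
    (hM : ∀ τ ∈ Su, satUID M τ) (hrel : ∀ R, ∃ t, (⟨R, t⟩ : Fact σ β) ∈ M)
    {level : γ → ℕ} {hom : γ → β} {N : ℕ}
    (hstep : ∀ F ∈ I, ∀ i j, level (F.2 i) < N → level (F.2 j) ≤ level (F.2 i) + 1)
    (hhom : ∀ F ∈ I, ∀ i, level (F.2 i) < N → (⟨F.1, fun j => hom (F.2 j)⟩ : Fact σ β) ∈ M)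
    (hclass : ∀ p q v, 0 < level v → occursAt I p v → occursAt I q v → UIDReaches Su p q)
    {q : CQ σ} (hq : IsACQ q) (hsize : q.size < N) (hI : satCQ I q) : satCQ M q := by
  classical
  obtain ⟨h, hh⟩ := hI
  let atoms := q.atoms.get
  have match_mem : ∀ a, (⟨(atoms a).1, fun i => h ((atoms a).2 i)⟩ : Fact σ γ) ∈ I :=
    fun a => hh _ (List.get_mem _ _)
  obtain ⟨d, hd, hdN, hunstraddled⟩ :=
    exists_unstraddled_level (level := fun a i => level (h ((atoms a).2 i)))
      ((Fintype.card_fin _).trans_lt hsize) fun a => hstep _ (match_mem a)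
  let high := Finset.univ.filter fun a => ∀ i, d ≤ level (h ((atoms a).2 i))
  have high_class : ∀ a ∈ high, ∀ b ∈ high, ∀ i j, (atoms b).2 j = (atoms a).2 i →
      UIDReaches Su ⟨(atoms b).1, j⟩ ⟨(atoms a).1, i⟩ := fun a ha b _ i j hji =>
    hclass _ _ _ (hd.trans_le ((Finset.mem_filter.1 ha).2 i))
      ⟨_, match_mem b, congrArg h hji⟩ ⟨_, match_mem a, rfl⟩
  obtain ⟨g, hg⟩ := exists_hom_of_not_hasIncidenceCycle hM hrel (atoms := atoms) hq.1
    (fun a => hq.2 _ (List.get_mem _ _)) high high_class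
  refine ⟨fun x => if level (h x) < d then hom (h x) else g x, fun A hA => ?_⟩
  obtain ⟨a, rfl⟩ : ∃ a, atoms a = A := List.get_of_mem hA
  by_cases ha : a ∈ high
  · have := (Finset.mem_filter.1 ha).2
    simpa only [not_lt.2 (this _), if_false] using hg a ha
  · obtain ⟨i, hi⟩ : ∃ i, level (h ((atoms a).2 i)) < d := by
      simpa only [high, Finset.mem_filter_univ, not_forall, not_le] using ha
    simpa only [hunstraddled a i _ hi, if_true] using
      hhom _ (match_mem a) i (hi.trans_le hdN)

variable {I₀ : Inst σ ℕ} {Su : Set (UID σ)} {Sf : Set (UFD σ)} {N : ℕ}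

lemma uidReaches_of_occursAt_chaseInst (hSu : TransClosedUID Su) (hSu' : ∀ τ ∈ Su, τ.rev ∈ Su)
    {p q : σ.Pos} {v : CEl σ} (hv : 0 < v.depth) (hp : occursAt (chaseInst I₀ Su) p v)
    (hq : occursAt (chaseInst I₀ Su) q v) : UIDReaches Su p q := by
  cases v with
  | base a => exact absurd hv (lt_irrefl 0)
  | null x s r =>
    obtain ⟨-, -, -, hrp⟩ := created_of_occursAt_chaseInst_null hp
    obtain ⟨-, -, -, hrq⟩ := created_of_occursAt_chaseInst_null hq
    exact (hrp.symm hSu').trans hSu hrq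

lemma occursAt_chaseInst_of_mem_classValues (hSu : TransClosedUID Su) {p : σ.Pos} {v : CEl σ}
    (hv : v ∈ classValues Su (truncChase I₀ Su N) p) : occursAt (chaseInst I₀ Su) p v := by
  obtain ⟨q, hqp, hq⟩ := hv
  exact occursAt_of_uidReaches (fun _ hτ => satUID_chaseInst hSu hτ) hqp
    (occursAt_chaseInst_of_truncChase hq)

lemma le_depth_of_mem_missing (hSu : TransClosedUID Su) {p : σ.Pos} {v : CEl σ}
    (hv : v ∈ missing Su (truncChase I₀ Su N) p) : N ≤ v.depth := by
  by_contra! hlt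
  exact hv.2 (occursAt_truncChase (occursAt_chaseInst_of_mem_classValues hSu hv.1) hlt)

/-- The extension of the chase depth to the completion of the chase truncated at depth `N`. -/
def paddedDepth (N : ℕ) : Padded σ (CEl σ) → ℕ := Sum.elim CEl.depth fun _ => N

variable (hI₀ : I₀.Finite)

lemma exists_chaseInst_fact_of_paddedDepth_lt (hSu : TransClosedUID Su) {R : σ.Rel}
    {t : Fin (σ.ar R) → Padded σ (CEl σ)}
    (ht : (⟨R, t⟩ : Fact σ _) ∈ completion Su Sf (truncChase_finite hI₀ Su N))
    {i : Fin (σ.ar R)} (hi : paddedDepth N (t i) < N) :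
    ∃ s, (⟨R, s⟩ : Fact σ (CEl σ)) ∈ chaseInst I₀ Su ∧ t = fun j => Sum.inl (s j) := by
  rcases mem_map_inl_or_missing_or_fresh_of_mem_completion _ ht with ht | ht
  · obtain ⟨s, hs, rfl⟩ := mem_map_iff.1 ht
    exact ⟨s, hs.1, rfl⟩
  · rcases ht i with ⟨v, hv, heq⟩ | ⟨n, heq⟩
    · rw [← heq] at hi
      exact absurd hi (not_lt.2 (le_depth_of_mem_missing hSu hv))
    · rw [← heq] at hi
      exact absurd hi (lt_irrefl N)

lemma uidReaches_of_occursAt_completion (hSu : TransClosedUID Su) (hSu' : ∀ τ ∈ Su, τ.rev ∈ Su)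
    {p q : σ.Pos} {v : Padded σ (CEl σ)} (hv : 0 < paddedDepth N v)
    (hp : occursAt (completion Su Sf (truncChase_finite hI₀ Su N)) p v)
    (hq : occursAt (completion Su Sf (truncChase_finite hI₀ Su N)) q v) : UIDReaches Su p q := by
  cases v with
  | inl v =>
    exact uidReaches_of_occursAt_chaseInst hSu hSu' hv
      (occursAt_chaseInst_of_mem_classValues hSu (mem_classValues_of_occursAt_completion _ hp))
      (occursAt_chaseInst_of_mem_classValues hSu (mem_classValues_of_occursAt_completion _ hq))
  | inr c =>
    exact (posClass_eq_iff hSu hSu').1 ((eq_posClass_of_occursAt_completion _ hp).symm.trans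
      (eq_posClass_of_occursAt_completion _ hq))

theorem unrEntailsU_of_satCQ_completion_truncChase (hSu : TransClosedUID Su)
    (hSu' : ∀ τ ∈ Su, τ.rev ∈ Su) (huseful : ∀ R, ∃ t, (⟨R, t⟩ : Fact σ _) ∈ chaseInst I₀ Su)
    {q : CQ σ} (hq : IsACQ q) (hsize : q.size < N)
    (hsat : satCQ (completion Su Sf (truncChase_finite hI₀ Su N)) q) :
    unrEntailsU I₀ Su Sf q := by
  intro M hI₀M hM
  have hchase {R : σ.Rel} {t : Fin (σ.ar R) → CEl σ} :=
    chaseHom_mem_of_mem_chaseInst hI₀M hM.1 (R := R) (t := t)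
  refine satCQ_of_graded hM.1 (fun R => ?_) (level := paddedDepth N)
    (hom := Sum.elim (chaseHom M) fun _ => 0) ?_ ?_ ?_ hq hsize hsat
  · obtain ⟨t, ht⟩ := huseful R
    exact ⟨_, hchase ht⟩
  · rintro ⟨R, t⟩ ht i j hi
    obtain ⟨s, hs, rfl⟩ := exists_chaseInst_fact_of_paddedDepth_lt hI₀ hSu ht hi
    exact depth_le_depth_add_one_of_mem_chaseInst hs i j
  · rintro ⟨R, t⟩ ht i hi
    obtain ⟨s, hs, rfl⟩ := exists_chaseInst_fact_of_paddedDepth_lt hI₀ hSu ht hi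
    exact hchase hs
  · exact fun p q v hv => uidReaches_of_occursAt_completion hI₀ hSu hSu' hv

end Soundness

/-- **k-universal models for reversible constraints.** For reversible UIDs `Su` and
UFDs `Sf` (with no useless relations: every relation occurs in the UID chase of `I₀`
by `Su`), every finite instance `I₀` satisfying `Sf` has a finite superinstance that
satisfies `Su ∪ Sf` and is `k`-sound for `Su ∪ Sf`, `I₀` and the class of acyclic
Boolean CQs. -/
theorem k_universal_models_reversible
    {σ : Sig} (Su : Set (UID σ)) (Sf : Set (UFD σ))
    (hrev : Reversible Su Sf) (k : ℕ)
    (I₀ : Inst σ ℕ) (hfin : I₀.Finite)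
    (hsat : ∀ φ ∈ Sf, satUFD I₀ φ)
    (huseful : ∀ R : σ.Rel, ∃ t : Fin (σ.ar R) → CEl σ,
        (⟨R, t⟩ : Fact σ (CEl σ)) ∈ chaseInst I₀ Su) :
    ∃ I : Inst σ ℕ, I₀ ⊆ I ∧ I.Finite ∧ satAllU I Su Sf ∧
      ∀ q : CQ σ, IsACQ q → q.size ≤ k → satCQ I q → unrEntailsU I₀ Su Sf q := by
  have ⟨hSu, hSf, hSu', _⟩ := hrev
  have hJ : (truncChase I₀ Su (k + 1)).Finite := truncChase_finite hfin Su (k + 1)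
  have hJsat : ∀ φ ∈ Sf, satUFD (truncChase I₀ Su (k + 1)) φ := fun φ hφ t u ht hu =>
    satUFD_chaseInst (hsat φ hφ) t u ht.1 hu.1
  have base_injective : Function.Injective fun a => (Sum.inl (CEl.base a) : Padded σ (CEl σ)) :=
    fun a b hab => CEl.base.inj (Sum.inl_injective hab)
  obtain ⟨g, hg, hgbase⟩ := exists_injOn_leftInverse base_injective
    (activeDom_finite (completion_finite Su Sf hJ))
  refine ⟨Inst.map g (completion Su Sf hJ), ?_, (completion_finite Su Sf hJ).image _,
    ⟨fun τ hτ => satUID_map g (satUID_completion hJ hrev hJsat hτ),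
      fun φ hφ => satUFD_map hg (satUFD_completion hJ hSf hφ (hJsat φ hφ))⟩, ?_⟩
  · rintro ⟨R, t⟩ ht
    have hmem := map_inl_subset_completion Su Sf hJ
      (mem_map_iff.2 ⟨_, base_mem_truncChase k.succ_pos ht, rfl⟩)
    exact mem_map_iff.2 ⟨_, hmem, funext fun i => (hgbase (t i)).symm⟩
  · exact fun q hq hsize hqsat => unrEntailsU_of_satCQ_completion_truncChase hfin hSu hSu' huseful
      hq (Nat.lt_succ_of_le hsize) (satCQ_of_satCQ_map hg hqsat)

end FQA
end

section
/- (Cycles in the constraint graph force reversibility) Let Σ = Σ_UID ∪ Σ_UFD be a set of UIDs and UFDs closed under the UID transitivity rule, the UFD transitivity rule, and the cycle rule, and let G(Σ) be its constraint graph. Then for any edge e lying on a directed cycle of G(Σ) and any dependency τ of Σ whose associated edge is e, the reverse τ⁻¹ of τ is also in Σ. -/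
namespace FQA

variable {σ : Sig} {α β : Type}

/-- The constraint graph of `Su ∪ Sf`: an edge `(p, q)` for each UID `p ⊆ q` of `Su`
and an edge `(R^b, R^a)` for each UFD `R^a → R^b` of `Sf`. -/
def cgEdge (Su : Set (UID σ)) (Sf : Set (UFD σ)) (p q : σ.Pos) : Prop :=
  (∃ h : p ≠ q, (⟨p, q, h⟩ : UID σ) ∈ Su) ∨
  (∃ φ ∈ Sf, UFD.posSrc φ = q ∧ UFD.posDst φ = p)

/-- Closure under the cycle rule: from any cycle
`R₁^{p₁} ⊆ R₂^{q₂}, R₂^{p₂} → R₂^{q₂}, R₂^{p₂} ⊆ R₃^{q₃}, …, Rₙ^{pₙ} ⊆ R₁^{q₁},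
R₁^{p₁} → R₁^{q₁}` of UIDs of `Su` and UFDs of `Sf`, the reverses of all of its UIDs
and UFDs are deduced. -/
def CycleClosed (Su : Set (UID σ)) (Sf : Set (UFD σ)) : Prop :=
  ∀ (n : ℕ) (τ : Fin (n + 1) → UID σ) (φ : Fin (n + 1) → UFD σ),
    (∀ i, τ i ∈ Su) → (∀ i, φ i ∈ Sf) →
    (∀ i, (τ i).src = UFD.posSrc (φ i)) →
    (∀ i, (τ i).dst = UFD.posDst (φ (i + 1))) →
    ∀ i, (τ i).rev ∈ Su ∧ (φ i).rev ∈ Sf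

/-!
Call an edge of the constraint graph a `U`-edge or an `F`-edge according to whether it comes from
a UID or a UFD. By transitivity the reflexive closures of both kinds are transitive, so consecutive
edges of the same kind merge, and every walk takes the form of
at most one `F`-edge, then blocks `UF`, then at most one `U`-edge. If the walk leads back to the
start of a given edge, the given edge is absorbed into the first or the last edge of this form and
a cyclically alternating walk remains, to which the cycle rule applies. Reversing the merged edge
and composing it with the edges of the walk it was merged from gives the reverse of the given edge.
-/

section AlternatingWalks

open Relation

variable {V : Type*} {r U F : V → V → Prop} {a b p q x : V}

theorem isTrans_reflGen_of_ne (h : ∀ ⦃a b c⦄, r a b → r b c → a ≠ c → r a c) :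
    IsTrans V (ReflGen r) where
  trans a b c
    | .refl, hbc => hbc
    | hab, .refl => hab
    | .single hab, .single hbc => by
      by_cases hac : a = c
      · exact hac ▸ .refl
      · exact .single (h hab hbc hac)

theorem rel_of_reflGen_of_ne (h : ReflGen r a b) (hne : a ≠ b) : r a b := by
  cases h with
  | refl => exact absurd rfl hne
  | single hab => exact hab

theorem exists_fin_walk_of_reflTransGen (h : ReflTransGen r a b) :
    ∃ (n : ℕ) (v : Fin (n + 1) → V), v 0 = a ∧ v (Fin.last n) = b ∧
      ∀ i : Fin n, r (v i.castSucc) (v i.succ) := by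
  induction h using ReflTransGen.head_induction_on with
  | refl => exact ⟨0, fun _ ↦ b, rfl, rfl, Fin.elim0⟩
  | @head a c hac _ ih =>
    obtain ⟨n, v, rfl, hlast, hstep⟩ := ih
    refine ⟨n + 1, Fin.cons a v, rfl, hlast, Fin.cases hac fun i ↦ ?_⟩
    simpa only [← Fin.succ_castSucc, Fin.cons_succ] using hstep i

theorem exists_fin_cycle_of_reflTransGen_comp (hU : U b x) (hF : F x a)
    (h : ReflTransGen (Comp U F) a b) :
    ∃ (n : ℕ) (v m : Fin (n + 1) → V),
      v 0 = a ∧ v (Fin.last n) = b ∧ m (Fin.last n) = x ∧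
        ∀ i, U (v i) (m i) ∧ F (m i) (v (i + 1)) := by
  obtain ⟨n, v, rfl, rfl, hstep⟩ := exists_fin_walk_of_reflTransGen h
  choose m hm using hstep
  refine ⟨n, v, Fin.snoc m x, rfl, rfl, Fin.snoc_last .., Fin.lastCases ?_ fun i ↦ ?_⟩
  · rw [Fin.snoc_last, Fin.last_add_one]
    exact ⟨hU, hF⟩
  · rw [Fin.snoc_castSucc, Fin.coeSucc_eq_succ]
    exact hm i

theorem exists_alternating_walk [IsTrans V (ReflGen U)] [IsTrans V (ReflGen F)]
    (h : ReflTransGen (U ⊔ F) p q) :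
    ∃ a b, ReflGen F p a ∧ ReflTransGen (Comp U F) a b ∧ ReflGen U b q := by
  induction h using ReflTransGen.head_induction_on with
  | refl => exact ⟨q, q, .refl, .refl, .refl⟩
  | @head p p' hpp' _ ih =>
    obtain ⟨a, b, hp'a, hab, hbq⟩ := ih
    rcases hpp' with hU | hF
    · cases hp'a with
      | single hp'a => exact ⟨p, b, .refl, .head ⟨p', hU, hp'a⟩ hab, hbq⟩
      | refl =>
        rcases hab.cases_head with rfl | ⟨c, ⟨m, hp'm, hmc⟩, hcb⟩
        · exact ⟨p, p, .refl, .refl, _root_.trans (.single hU) hbq⟩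
        · have hpm : ReflGen U p m := _root_.trans (.single hU) (.single hp'm)
          cases hpm with
          | refl => exact ⟨c, b, .single hmc, hcb, hbq⟩
          | single hpm => exact ⟨p, b, .refl, .head ⟨m, hpm, hmc⟩ hcb, hbq⟩
    · exact ⟨a, b, _root_.trans (.single hF) hp'a, hab, hbq⟩

/-- The cycle rule for two arbitrary edge relations: whenever a `U`-edge and an `F`-edge following
it are closed into a cycle by a walk of alternating `U`- and `F`-edges, both can be reversed.
By rotating the cycle, this covers each of its edges. -/
def AlternatingCycleClosed (U F : V → V → Prop) : Prop :=
  ∀ ⦃a b x⦄, U b x → F x a → ReflTransGen (Comp U F) a b → U x b ∧ F a x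

namespace AlternatingCycleClosed

theorem reflGen_left_of_reflTransGen_comp [IsTrans V (ReflGen U)]
    (hcyc : AlternatingCycleClosed U F) (hbx : ReflGen U b x)
    (hxb : ReflTransGen (Comp U F) x b) : ReflGen U x b := by
  rcases hxb.cases_head with rfl | ⟨c, ⟨m, hxm, hmc⟩, hcb⟩
  · exact .refl
  · have hmb : ReflGen U m b := by
      have hbm : ReflGen U b m := _root_.trans hbx (.single hxm)
      cases hbm with
      | refl => exact .refl
      | single hbm => exact .single (hcyc hbm hmc hcb).1
    exact _root_.trans (.single hxm) hmb

theorem reflGen_right_of_reflTransGen_comp [IsTrans V (ReflGen F)]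
    (hcyc : AlternatingCycleClosed U F) (hxa : ReflGen F x a)
    (hax : ReflTransGen (Comp U F) a x) : ReflGen F a x := by
  rcases hax.cases_tail with rfl | ⟨c, hac, ⟨m, hcm, hmx⟩⟩
  · exact .refl
  · have ham : ReflGen F a m := by
      have hma : ReflGen F m a := _root_.trans (.single hmx) hxa
      cases hma with
      | refl => exact .refl
      | single hma => exact .single (hcyc hcm hma hac).2
    exact _root_.trans ham (.single hmx)

theorem reflGen_reverse_of_reflGen [IsTrans V (ReflGen U)] [IsTrans V (ReflGen F)]
    (hcyc : AlternatingCycleClosed U F) (hbx : ReflGen U b x) (hxa : ReflGen F x a)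
    (hab : ReflTransGen (Comp U F) a b) : ReflGen U x b ∧ ReflGen F a x := by
  cases hbx with
  | refl => exact ⟨.refl, hcyc.reflGen_right_of_reflTransGen_comp hxa hab⟩
  | single hbx =>
    cases hxa with
    | refl => exact ⟨hcyc.reflGen_left_of_reflTransGen_comp (.single hbx) hab, .refl⟩
    | single hxa => exact (hcyc hbx hxa hab).imp .single .single

variable [IsTrans V (ReflGen U)] [IsTrans V (ReflGen F)]

theorem reflGen_left_of_reflTransGen_sup (hcyc : AlternatingCycleClosed U F) (hpq : U p q)
    (hqp : ReflTransGen (U ⊔ F) q p) : ReflGen U q p := by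
  obtain ⟨a, b, hqa, hab, hbp⟩ := exists_alternating_walk hqp
  have hbq : ReflGen U b q := _root_.trans hbp (.single hpq)
  exact _root_.trans (hcyc.reflGen_reverse_of_reflGen hbq hqa hab).1 hbp

theorem reflGen_right_of_reflTransGen_sup (hcyc : AlternatingCycleClosed U F) (hpq : F p q)
    (hqp : ReflTransGen (U ⊔ F) q p) : ReflGen F q p := by
  obtain ⟨a, b, hqa, hab, hbp⟩ := exists_alternating_walk hqp
  have hpa : ReflGen F p a := _root_.trans (.single hpq) hqa
  exact _root_.trans hqa (hcyc.reflGen_reverse_of_reflGen hbp hpa hab).2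

end AlternatingCycleClosed

end AlternatingWalks

section ConstraintGraph

open Relation

variable {Su : Set (UID σ)} {Sf : Set (UFD σ)}

/-- The edges of the constraint graph associated with UIDs, i.e. the first disjunct of `cgEdge`. -/
def uidEdge (Su : Set (UID σ)) (p q : σ.Pos) : Prop :=
  ∃ h : p ≠ q, (⟨p, q, h⟩ : UID σ) ∈ Su

/-- The edges of the constraint graph associated with UFDs, i.e. the second disjunct of `cgEdge`.
They run from the target of the UFD to its source. -/
def ufdEdge (Sf : Set (UFD σ)) (p q : σ.Pos) : Prop :=
  ∃ φ ∈ Sf, UFD.posSrc φ = q ∧ UFD.posDst φ = p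

theorem cgEdge_eq_sup (Su : Set (UID σ)) (Sf : Set (UFD σ)) :
    cgEdge Su Sf = uidEdge Su ⊔ ufdEdge Sf :=
  rfl

theorem UFD.posSrc_ne_posDst (φ : UFD σ) : φ.posSrc ≠ φ.posDst :=
  fun h ↦ φ.ne (eq_of_heq (Sigma.mk.inj h).2)

theorem UFD.eq_of_pos_eq {φ ψ : UFD σ} (hsrc : φ.posSrc = ψ.posSrc)
    (hdst : φ.posDst = ψ.posDst) : φ = ψ := by
  obtain ⟨R, i, j, hij⟩ := φ
  obtain ⟨R', i', j', hij'⟩ := ψ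
  obtain rfl : R = R' := congrArg Sigma.fst hsrc
  obtain rfl : i = i' := eq_of_heq (Sigma.mk.inj hsrc).2
  obtain rfl : j = j' := eq_of_heq (Sigma.mk.inj hdst).2
  rfl

theorem uidEdge_src_dst_iff {τ : UID σ} : uidEdge Su τ.src τ.dst ↔ τ ∈ Su :=
  ⟨fun h ↦ h.2, fun h ↦ ⟨τ.ne, h⟩⟩

theorem ufdEdge_posDst_posSrc_iff {φ : UFD σ} : ufdEdge Sf φ.posDst φ.posSrc ↔ φ ∈ Sf :=
  ⟨fun ⟨_, hψ, hsrc, hdst⟩ ↦ UFD.eq_of_pos_eq hsrc hdst ▸ hψ, fun h ↦ ⟨φ, h, rfl, rfl⟩⟩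

theorem TransClosedUID.isTrans_reflGen_uidEdge (htU : TransClosedUID Su) :
    IsTrans σ.Pos (ReflGen (uidEdge Su)) :=
  isTrans_reflGen_of_ne fun _ _ _ ⟨_, hpq⟩ ⟨_, hqr⟩ hne ↦ ⟨hne, htU _ hpq _ hqr rfl hne⟩

theorem TransClosedUFD.isTrans_reflGen_ufdEdge (htF : TransClosedUFD Sf) :
    IsTrans σ.Pos (ReflGen (ufdEdge Sf)) := by
  refine isTrans_reflGen_of_ne ?_
  rintro _ _ _ ⟨⟨R, j, k, hjk⟩, hφ, rfl, rfl⟩ ⟨⟨R', i, j', hij⟩, hψ, rfl, hj⟩ hne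
  obtain rfl : R' = R := congrArg Sigma.fst hj
  obtain rfl : j' = j := eq_of_heq (Sigma.mk.inj hj).2
  have hik : i ≠ k := fun h ↦ hne (congrArg (Sigma.mk R') h.symm)
  exact ⟨⟨R', i, k, hik⟩, htF R' i j' k hij hjk hik hψ hφ, rfl, rfl⟩

theorem CycleClosed.reverse_edges (hcyc : CycleClosed Su Sf) {n : ℕ}
    {v m : Fin (n + 1) → σ.Pos}
    (h : ∀ i, uidEdge Su (v i) (m i) ∧ ufdEdge Sf (m i) (v (i + 1))) (i : Fin (n + 1)) :
    uidEdge Su (m i) (v i) ∧ ufdEdge Sf (v (i + 1)) (m i) := by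
  choose hU hF using h
  choose hne hτ using hU
  choose φ hφ hsrc hdst using hF
  -- The cycle rule pairs each UID with the UFD entering its source, hence the shift by one.
  have hrev := hcyc n (fun i ↦ ⟨v i, m i, hne i⟩) (fun i ↦ φ (i - 1)) hτ (fun i ↦ hφ (i - 1))
    (fun i ↦ by rw [hsrc, sub_add_cancel]) (fun i ↦ by rw [add_sub_cancel_right, hdst])
  have hφrev : (φ i).rev ∈ Sf := by simpa only [add_sub_cancel_right] using (hrev (i + 1)).2
  exact ⟨⟨(hne i).symm, (hrev i).1⟩, (φ i).rev, hφrev, hdst i, hsrc i⟩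

theorem CycleClosed.alternatingCycleClosed (hcyc : CycleClosed Su Sf) :
    AlternatingCycleClosed (uidEdge Su) (ufdEdge Sf) := by
  intro a b x hU hF hab
  obtain ⟨n, v, m, rfl, rfl, rfl, h⟩ := exists_fin_cycle_of_reflTransGen_comp hU hF hab
  simpa only [Fin.last_add_one] using hcyc.reverse_edges h (Fin.last n)

end ConstraintGraph

/-- **Cycles in the constraint graph force reversibility.** If `Su ∪ Sf` is closed
under the UID transitivity rule, the UFD transitivity rule, and the cycle rule, then
any dependency whose associated edge lies on a directed cycle of the constraint graph
has its reverse in the constraint set. -/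
theorem cycle_edge_reversible
    {σ : Sig} (Su : Set (UID σ)) (Sf : Set (UFD σ))
    (htU : TransClosedUID Su) (htF : TransClosedUFD Sf)
    (hcyc : CycleClosed Su Sf) :
    (∀ τ ∈ Su, Relation.ReflTransGen (cgEdge Su Sf) τ.dst τ.src → τ.rev ∈ Su) ∧
    (∀ φ ∈ Sf,
      Relation.ReflTransGen (cgEdge Su Sf) (UFD.posSrc φ) (UFD.posDst φ) →
      φ.rev ∈ Sf) := by
  have := htU.isTrans_reflGen_uidEdge
  have := htF.isTrans_reflGen_ufdEdge
  have hclosed := hcyc.alternatingCycleClosed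
  rw [cgEdge_eq_sup]
  refine ⟨fun τ hτ hwalk ↦ ?_, fun φ hφ hwalk ↦ ?_⟩
  · have hrev := hclosed.reflGen_left_of_reflTransGen_sup (uidEdge_src_dst_iff.2 hτ) hwalk
    exact uidEdge_src_dst_iff.1 (rel_of_reflGen_of_ne hrev τ.ne.symm)
  · have hrev := hclosed.reflGen_right_of_reflTransGen_sup (ufdEdge_posDst_posSrc_iff.2 hφ) hwalk
    exact ufdEdge_posDst_posSrc_iff.1 (rel_of_reflGen_of_ne hrev φ.posSrc_ne_posDst)

end FQA
end
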